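/- Let k be a field and let r ≥ 1 and n₁,…,n_r be positive integers. Then there exist a field extension k ⊆ K and central division algebras A₁,…,A_r over K with deg(Aⱼ) = nⱼ such that for all integers k₁,…,k_r, the index of the Brauer class k₁[A₁] + ⋯ + k_r[A_r] ∈ Br(K) equals ∏ⱼ nⱼ/gcd(nⱼ,kⱼ): that is, every central division algebra over K whose Brauer class equals k₁[A₁] + ⋯ + k_r[A_r] has degree ∏ⱼ nⱼ/gcd(nⱼ,kⱼ). -/

import Mathlib

open scoped TensorProduct

universe u

set_option linter.all false

namespace Stmt9

section Strip

variable {K : Type u} [Field K]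

theorem strip_matrix {U : Type u} [AddCommGroup U] [Module K U] [FiniteDimensional K U]
    (c : ℕ) (hc : 0 < c) (θ : Matrix (Fin c) (Fin c) K →ₐ[K] Module.End K U) :
    ∃ (V : Type u) (_ : AddCommGroup V) (_ : Module K V), FiniteDimensional K V ∧
      Module.finrank K U = c * Module.finrank K V ∧
      Nonempty (Subalgebra.centralizer K (Set.range θ) →ₐ[K] Module.End K V) := by
  classical
  let o : Fin c := ⟨0, hc⟩
  let E : Fin c → Fin c → Module.End K U := fun i j => θ (Matrix.single i j 1)
  have hE : ∀ i j k l, E i j * E k l = if j = k then E i l else 0 := by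
    intro i j k l
    simp only [E, ← map_mul]
    split_ifs with h
    · subst h; simp
    · rw [Matrix.single_mul_single_of_ne _ _ _ _ h, map_zero]
  have hE' : ∀ i j k l u, E i j (E k l u) = if j = k then E i l u else 0 := by
    intro i j k l u
    have := LinearMap.congr_fun (hE i j k l) u
    rw [Module.End.mul_apply] at this
    rw [this]; split_ifs <;> rfl
  have hsum : ∑ i, E i i = 1 := by
    simp only [E, ← map_sum]
    rw [← map_one θ]
    congr 1
    ext a b
    simp only [Matrix.sum_apply, Matrix.single_apply, Matrix.one_apply]
    rw [Finset.sum_eq_single a (fun x _ hx => by simp [hx]) (by simp)]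
    simp
  let V : Submodule K U := LinearMap.range (E o o)
  have hV : ∀ v ∈ V, E o o v = v := by
    rintro _ ⟨w, rfl⟩
    rw [hE']; simp
  refine ⟨V, inferInstance, inferInstance, inferInstance, ?_, ?_⟩
  · let e : U ≃ₗ[K] (Fin c → V) :=
      { toFun := fun u i => ⟨E o i u, E o i u, by rw [hE']; simp⟩
        map_add' := fun a b => by ext; simp
        map_smul' := fun a b => by ext; simp
        invFun := fun f => ∑ i, E i o (f i)
        left_inv := fun u => by
          simp only [hE', if_true]
          have := LinearMap.congr_fun hsum u
          simpa using this
        right_inv := fun f => by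
          funext i
          apply Subtype.ext
          simp only [map_sum, hE']
          simp [hV _ (f i).2] }
    rw [e.finrank_eq, Module.finrank_pi_fintype]
    simp
  · have hmem : ∀ z ∈ Subalgebra.centralizer K (Set.range θ), ∀ v ∈ V, z v ∈ V := by
      intro z hz v hv
      rw [Subalgebra.mem_centralizer_iff] at hz
      have := LinearMap.congr_fun (hz (E o o) ⟨_, rfl⟩) v
      simp only [Module.End.mul_apply, hV v hv] at this
      exact ⟨z v, this⟩
    exact ⟨{ toFun := fun z => (z : Module.End K U).restrict (hmem z.1 z.2)
             map_one' := by ext; simp [LinearMap.restrict_apply]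
             map_mul' := fun a b => by ext; simp [LinearMap.restrict_apply]
             map_zero' := by ext; simp [LinearMap.restrict_apply]
             map_add' := fun a b => by ext; simp [LinearMap.restrict_apply]
             commutes' := fun a => by ext; simp [LinearMap.restrict_apply, Algebra.algebraMap_eq_smul_one] }⟩

theorem dvd_of_divisionRing {V : Type u} [AddCommGroup V] [Module K V]
    {B : Type u} [DivisionRing B] [Algebra K B] (f : B →ₐ[K] Module.End K V) :
    Module.finrank K B ∣ Module.finrank K V := by
  let _ : Module B V := Module.compHom V f.toRingHom
  have : IsScalarTower K B V := ⟨fun a b v => by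
    change f (a • b) v = a • (f b v)
    simp⟩
  rw [← Module.finrank_mul_finrank K B V]
  exact dvd_mul_right _ _

theorem azumaya {C : Type u} [DivisionRing C] [Algebra K C] [FiniteDimensional K C]
    [Algebra.IsCentral K C] : Function.Bijective (AlgHom.mulLeftRight K C) := by
  let _ : Module (C ⊗[K] Cᵐᵒᵖ) C := TensorProduct.Algebra.module
  have hsm : ∀ (r : C ⊗[K] Cᵐᵒᵖ) (x : C), r • x = AlgHom.mulLeftRight K C r x := fun r x => rfl
  have : IsScalarTower K (C ⊗[K] Cᵐᵒᵖ) C := ⟨fun a b c => by simp [hsm]⟩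
  have : IsSimpleModule (C ⊗[K] Cᵐᵒᵖ) C := by
    rw [isSimpleModule_iff_toSpanSingleton_surjective]
    refine ⟨inferInstance, fun m hm y => ⟨(y * m⁻¹) ⊗ₜ 1, ?_⟩⟩
    simp [hsm, hm]
  have hend : ∀ φ : Module.End (C ⊗[K] Cᵐᵒᵖ) C, ∃ a : K, ∀ x, φ x = a • x := by
    intro φ
    have h1 : ∀ x, φ x = x * φ 1 := fun x => by
      have := φ.map_smul (x ⊗ₜ 1) 1
      simpa [hsm] using this
    have h2 : ∀ x, φ x = φ 1 * x := fun x => by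
      have := φ.map_smul (1 ⊗ₜ MulOpposite.op x) 1
      simpa [hsm] using this
    have h3 : φ 1 ∈ Subalgebra.center K C := by
      rw [Subalgebra.mem_center_iff]; intro b; rw [← h1, ← h2]
    obtain ⟨a, ha⟩ := Algebra.mem_bot.1 (Algebra.IsCentral.out h3)
    exact ⟨a, fun x => by rw [h2, ← ha, Algebra.smul_def]⟩
  have hsurj : Function.Surjective (AlgHom.mulLeftRight K C) := by
    classical
    intro g
    let f : Module.End (Module.End (C ⊗[K] Cᵐᵒᵖ) C) C :=
      { toFun := g
        map_add' := g.map_add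
        map_smul' := fun φ x => by
          obtain ⟨a, ha⟩ := hend φ
          simp [ha] }
    let b := Module.finBasis K C
    obtain ⟨r, hr⟩ := jacobson_density f (Finset.univ.image b)
    refine ⟨r, b.ext fun i => ?_⟩
    rw [← hsm, ← hr (b i) (by simp)]
    rfl
  refine ⟨?_, hsurj⟩
  have hd : Module.finrank K (C ⊗[K] Cᵐᵒᵖ) = Module.finrank K (Module.End K C) := by
    rw [Module.finrank_tensorProduct, Module.finrank_linearMap]
    congr 1
    exact (MulOpposite.opLinearEquiv K).symm.finrank_eq
  exact (LinearMap.injective_iff_surjective_of_finrank_eq_finrank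
    (f := (AlgHom.mulLeftRight K C).toLinearMap) hd).2 hsurj

theorem strip_pair {U : Type u} [AddCommGroup U] [Module K U] [FiniteDimensional K U]
    {C : Type u} [DivisionRing C] [Algebra K C] [FiniteDimensional K C]
    [Algebra.IsCentral K C] (f : C →ₐ[K] Module.End K U) (g : Cᵐᵒᵖ →ₐ[K] Module.End K U)
    (hfg : ∀ x y, Commute (f x) (g y)) :
    ∃ (V : Type u) (_ : AddCommGroup V) (_ : Module K V), FiniteDimensional K V ∧
      Module.finrank K U = Module.finrank K C * Module.finrank K V ∧
      Nonempty (Subalgebra.centralizer K (Set.range f ∪ Set.range g) →ₐ[K] Module.End K V) := by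
  let e1 := (algEquivMatrix (Module.finBasis K C)).symm
  let e2 := (AlgEquiv.ofBijective _ (azumaya (K := K) (C := C))).symm
  let h := Algebra.TensorProduct.lift f g hfg
  obtain ⟨V, i1, i2, i3, h4, ⟨ρ⟩⟩ := strip_matrix (Module.finrank K C) Module.finrank_pos
    (h.comp ((e2.toAlgHom).comp e1.toAlgHom))
  refine ⟨V, i1, i2, i3, h4, ⟨ρ.comp (Subalgebra.inclusion ?_)⟩⟩
  intro z hz
  rw [Subalgebra.mem_centralizer_iff] at hz ⊢
  have key : ∀ w, h w * z = z * h w := by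
    intro w
    induction w using TensorProduct.induction_on with
    | zero => simp
    | tmul x y =>
      simp only [h, Algebra.TensorProduct.lift_tmul]
      have h1 := hz (f x) (Or.inl ⟨x, rfl⟩)
      have h2 := hz (g y) (Or.inr ⟨y, rfl⟩)
      rw [mul_assoc, h2, ← mul_assoc, h1, mul_assoc]
    | add x y hx hy => rw [map_add, add_mul, mul_add, hx, hy]
  rintro _ ⟨w, rfl⟩
  exact key _

theorem strip_family {U : Type u} [AddCommGroup U] [Module K U] [FiniteDimensional K U]
    {ι : Type} (s : Finset ι) (C : ι → Type u) [∀ i, DivisionRing (C i)] [∀ i, Algebra K (C i)]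
    [∀ i, FiniteDimensional K (C i)] [∀ i, Algebra.IsCentral K (C i)]
    (f : ∀ i, C i →ₐ[K] Module.End K U) (g : ∀ i, (C i)ᵐᵒᵖ →ₐ[K] Module.End K U)
    (hfg : ∀ i j x y, Commute (f i x) (g j y))
    (hff : ∀ i j, i ≠ j → ∀ x y, Commute (f i x) (f j y))
    (hgg : ∀ i j, i ≠ j → ∀ x y, Commute (g i x) (g j y)) :
    ∃ (V : Type u) (_ : AddCommGroup V) (_ : Module K V), FiniteDimensional K V ∧
      Module.finrank K U = (∏ i ∈ s, Module.finrank K (C i)) * Module.finrank K V ∧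
      Nonempty (Subalgebra.centralizer K (⋃ i ∈ s, (Set.range (f i) ∪ Set.range (g i)))
        →ₐ[K] Module.End K V) := by
  classical
  induction s using Finset.induction_on with
  | empty => exact ⟨U, inferInstance, inferInstance, inferInstance, by simp, ⟨Subalgebra.val _⟩⟩
  | insert a s ha ih =>
    obtain ⟨V, i1, i2, i3, h4, ⟨ρ⟩⟩ := ih
    have hf : ∀ x, f a x ∈ Subalgebra.centralizer K
        (⋃ i ∈ s, (Set.range (f i) ∪ Set.range (g i))) := by
      intro x
      rw [Subalgebra.mem_centralizer_iff]
      intro z hz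
      simp only [Set.mem_iUnion] at hz
      obtain ⟨i, hi, hz⟩ := hz
      have hne : i ≠ a := by rintro rfl; exact ha hi
      rcases hz with ⟨y, rfl⟩ | ⟨y, rfl⟩
      · exact hff _ _ hne _ _
      · exact (hfg _ _ _ _).symm
    have hg : ∀ x, g a x ∈ Subalgebra.centralizer K
        (⋃ i ∈ s, (Set.range (f i) ∪ Set.range (g i))) := by
      intro x
      rw [Subalgebra.mem_centralizer_iff]
      intro z hz
      simp only [Set.mem_iUnion] at hz
      obtain ⟨i, hi, hz⟩ := hz
      have hne : i ≠ a := by rintro rfl; exact ha hi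
      rcases hz with ⟨y, rfl⟩ | ⟨y, rfl⟩
      · exact hfg _ _ _ _
      · exact hgg _ _ hne _ _
    obtain ⟨V', j1, j2, j3, h4', ⟨ρ'⟩⟩ := strip_pair
      (ρ.comp ((f a).codRestrict _ hf)) (ρ.comp ((g a).codRestrict _ hg)) (by
        intro x y
        simp only [AlgHom.comp_apply]
        apply Commute.map
        apply Subtype.ext
        exact hfg a a x y)
    refine ⟨V', j1, j2, j3, ?_, ?_⟩
    · rw [h4, h4', Finset.prod_insert ha]; ring
    · have hle : Subalgebra.centralizer K
        (⋃ i ∈ insert a s, (Set.range (f i) ∪ Set.range (g i))) ≤ Subalgebra.centralizer K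
        (⋃ i ∈ s, (Set.range (f i) ∪ Set.range (g i))) := by
        apply Subalgebra.centralizer_le
        apply Set.biUnion_subset_biUnion_left
        intro i hi
        exact Finset.mem_insert_of_mem hi
      refine ⟨ρ'.comp ((ρ.comp (Subalgebra.inclusion hle)).codRestrict _ ?_)⟩
      rintro ⟨z, hz⟩
      rw [Subalgebra.mem_centralizer_iff] at hz ⊢
      have h1 : ∀ x, f a x * z = z * f a x := fun x => hz _ (by simp)
      have h2 : ∀ x, g a x * z = z * g a x := fun x => hz _ (by simp)
      rintro _ (⟨x, rfl⟩ | ⟨x, rfl⟩)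
      · simp only [AlgHom.comp_apply, ← map_mul]
        congr 1
        apply Subtype.ext
        exact h1 x
      · simp only [AlgHom.comp_apply, ← map_mul]
        congr 1
        apply Subtype.ext
        exact h2 x

end Strip


/-- A slot: a subgroup with a character to the units of the base field. -/
structure Slot (K : Type u) [Field K] (Γ : Type) [CommGroup Γ] where
  Λ : Subgroup Γ
  τ : Λ →* Kˣ

section Alg

variable {K M : Type u} [Field K] [Field M] [Algebra K M] {Γ : Type} [CommGroup Γ]
  (σ : Γ →* (M ≃ₐ[K] M)) (s : Slot K Γ)

/-- the fixed field of the slot -/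
noncomputable def Slot.fix : IntermediateField K M :=
  IntermediateField.fixedField (s.Λ.map σ)

variable {σ s}

theorem Slot.mem_fix {x : M} : x ∈ s.fix σ ↔ ∀ l ∈ s.Λ, σ l x = x := by
  unfold Slot.fix
  rw [IntermediateField.mem_fixedField_iff]
  constructor
  · intro h l hl
    exact h (σ l) ⟨l, hl, rfl⟩
  · rintro h _ ⟨l, hl, rfl⟩
    exact h l hl

variable (σ s)

/-- the action on the fixed field -/
noncomputable def Slot.act (γ : Γ) (x : s.fix σ) : s.fix σ :=
  ⟨σ γ x, by
    rw [Slot.mem_fix]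
    intro l hl
    rw [← AlgEquiv.mul_apply, ← map_mul, mul_comm, map_mul, AlgEquiv.mul_apply,
      Slot.mem_fix.1 x.2 l hl]⟩

/-- defining relations -/
inductive Slot.Rel : FreeAlgebra K (s.fix σ ⊕ Γ) → FreeAlgebra K (s.fix σ ⊕ Γ) → Prop
  | add (a b : s.fix σ) : Slot.Rel (FreeAlgebra.ι K (Sum.inl (a + b)))
      (FreeAlgebra.ι K (Sum.inl a) + FreeAlgebra.ι K (Sum.inl b))
  | mul (a b : s.fix σ) : Slot.Rel (FreeAlgebra.ι K (Sum.inl (a * b)))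
      (FreeAlgebra.ι K (Sum.inl a) * FreeAlgebra.ι K (Sum.inl b))
  | alg (c : K) : Slot.Rel (FreeAlgebra.ι K (Sum.inl (algebraMap K _ c))) (algebraMap K _ c)
  | vone : Slot.Rel (FreeAlgebra.ι K (Sum.inr 1)) 1
  | vmul (a b : Γ) : Slot.Rel (FreeAlgebra.ι K (Sum.inr (a * b)))
      (FreeAlgebra.ι K (Sum.inr a) * FreeAlgebra.ι K (Sum.inr b))
  | comm (γ : Γ) (a : s.fix σ) :
      Slot.Rel (FreeAlgebra.ι K (Sum.inr γ) * FreeAlgebra.ι K (Sum.inl a))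
      (FreeAlgebra.ι K (Sum.inl (s.act σ γ a)) * FreeAlgebra.ι K (Sum.inr γ))
  | lam (l : s.Λ) : Slot.Rel (FreeAlgebra.ι K (Sum.inr (l : Γ)))
      (algebraMap K _ (s.τ l : K))

/-- the crossed product algebra of the slot -/
def Slot.Alg : Type u := RingQuot (s.Rel σ)

noncomputable instance : Ring (s.Alg σ) := inferInstanceAs (Ring (RingQuot (s.Rel σ)))
noncomputable instance : Algebra K (s.Alg σ) := inferInstanceAs (Algebra K (RingQuot (s.Rel σ)))

/-- quotient map -/
noncomputable def Slot.qm : FreeAlgebra K (s.fix σ ⊕ Γ) →ₐ[K] s.Alg σ :=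
  RingQuot.mkAlgHom K (s.Rel σ)

theorem Slot.qm_rel {a b} (h : s.Rel σ a b) : s.qm σ a = s.qm σ b :=
  RingQuot.mkAlgHom_rel K h

theorem Slot.qm_surjective : Function.Surjective (s.qm σ) :=
  RingQuot.mkAlgHom_surjective K _

/-- the field embedding -/
noncomputable def Slot.φ : s.fix σ →ₐ[K] s.Alg σ :=
  AlgHom.ofLinearMap
    { toFun := fun a => s.qm σ (FreeAlgebra.ι K (Sum.inl a))
      map_add' := fun a b => by rw [s.qm_rel σ (.add a b), map_add]
      map_smul' := fun c a => by
        rw [Algebra.smul_def, s.qm_rel σ (.mul _ a), map_mul, s.qm_rel σ (.alg c),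
          AlgHom.commutes, RingHom.id_apply, Algebra.smul_def] }
    (by
      have := s.qm_rel σ (.alg 1)
      simpa using this)
    (fun a b => by
      have := s.qm_rel σ (.mul a b)
      simpa using this)

/-- the group elements -/
noncomputable def Slot.v : Γ →* s.Alg σ where
  toFun γ := s.qm σ (FreeAlgebra.ι K (Sum.inr γ))
  map_one' := by rw [s.qm_rel σ .vone, map_one]
  map_mul' a b := by rw [s.qm_rel σ (.vmul a b), map_mul]

theorem Slot.v_φ (γ : Γ) (a : s.fix σ) :
    s.v σ γ * s.φ σ a = s.φ σ (s.act σ γ a) * s.v σ γ := by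
  have := s.qm_rel σ (.comm γ a)
  rw [map_mul, map_mul] at this
  exact this

theorem Slot.v_lam (l : s.Λ) : s.v σ (l : Γ) = algebraMap K _ (s.τ l : K) := by
  have := s.qm_rel σ (.lam l)
  rw [AlgHom.commutes] at this
  exact this

/-- universal property -/
noncomputable def Slot.lift {R : Type*} [Semiring R] [Algebra K R] (f : s.fix σ →ₐ[K] R) (w : Γ →* R)
    (h1 : ∀ γ a, w γ * f a = f (s.act σ γ a) * w γ)
    (h2 : ∀ l : s.Λ, w (l : Γ) = algebraMap K R (s.τ l : K)) : s.Alg σ →ₐ[K] R :=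
  RingQuot.liftAlgHom K ⟨FreeAlgebra.lift K (Sum.elim f w), by
    intro a b h
    cases h with
    | add a b => simp
    | mul a b => simp
    | alg c => simp
    | vone => simp
    | vmul a b => simp
    | comm γ a => simpa using h1 γ a
    | lam l => simpa using h2 l⟩

section
variable {R : Type*} [Semiring R] [Algebra K R] (f : s.fix σ →ₐ[K] R) (w : Γ →* R)
    (h1 : ∀ γ a, w γ * f a = f (s.act σ γ a) * w γ)
    (h2 : ∀ l : s.Λ, w (l : Γ) = algebraMap K R (s.τ l : K))

theorem Slot.lift_mk (x) : s.lift σ f w h1 h2 (s.qm σ x) =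
    FreeAlgebra.lift K (Sum.elim f w) x := RingQuot.liftAlgHom_mkAlgHom_apply K _ _ _

@[simp] theorem Slot.lift_φ (a) : s.lift σ f w h1 h2 (s.φ σ a) = f a :=
  (s.lift_mk σ f w h1 h2 (FreeAlgebra.ι K (Sum.inl a))).trans (by simp)

@[simp] theorem Slot.lift_v (a) : s.lift σ f w h1 h2 (s.v σ a) = w a :=
  (s.lift_mk σ f w h1 h2 (FreeAlgebra.ι K (Sum.inr a))).trans (by simp)

end

theorem Slot.span_top : Submodule.span K
    (Set.range fun p : s.fix σ × Γ => s.φ σ p.1 * s.v σ p.2) = ⊤ := by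
  set W := Submodule.span K (Set.range fun p : s.fix σ × Γ => s.φ σ p.1 * s.v σ p.2) with hW
  have hmem : ∀ a γ, s.φ σ a * s.v σ γ ∈ W := fun a γ => Submodule.subset_span ⟨(a, γ), rfl⟩
  have hmul : W * W ≤ W := by
    rw [hW, Submodule.span_mul_span, Submodule.span_le]
    rintro _ ⟨_, ⟨⟨a, γ⟩, rfl⟩, _, ⟨⟨b, δ⟩, rfl⟩, rfl⟩
    have : s.φ σ a * s.v σ γ * (s.φ σ b * s.v σ δ) =
        s.φ σ (a * s.act σ γ b) * s.v σ (γ * δ) := by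
      rw [map_mul, map_mul, mul_assoc, ← mul_assoc (s.v σ γ), s.v_φ]
      simp only [mul_assoc]
    change s.φ σ a * s.v σ γ * (s.φ σ b * s.v σ δ) ∈ _
    rw [this]
    exact hmem _ _
  rw [eq_top_iff]
  rintro x -
  obtain ⟨x, rfl⟩ := s.qm_surjective σ x
  induction x using FreeAlgebra.induction with
  | grade0 c =>
    rw [AlgHom.commutes]
    have := hmem (algebraMap K _ c) 1
    simpa using this
  | grade1 x =>
    rcases x with a | γ
    · have := hmem a 1
      rw [map_one, mul_one] at this
      exact this
    · have := hmem 1 γ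
      rw [map_one, one_mul] at this
      exact this
  | mul a b ha hb =>
    rw [map_mul]
    exact hmul (Submodule.mul_mem_mul ha hb)
  | add a b ha hb =>
    rw [map_add]
    exact add_mem ha hb

theorem Slot.alg_induction {p : s.Alg σ → Prop} (x : s.Alg σ)
    (h : ∀ a γ, p (s.φ σ a * s.v σ γ)) (h0 : p 0) (hadd : ∀ x y, p x → p y → p (x + y))
    (hs : ∀ (c : K) x, p x → p (c • x)) : p x := by
  have hx : x ∈ Submodule.span K
    (Set.range fun p : s.fix σ × Γ => s.φ σ p.1 * s.v σ p.2) := by rw [s.span_top]; trivial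
  induction hx using Submodule.span_induction with
  | mem x hx => obtain ⟨⟨a, γ⟩, rfl⟩ := hx; exact h a γ
  | zero => exact h0
  | add x y _ _ hx hy => exact hadd x y hx hy
  | smul c x _ hx => exact hs c x hx

theorem Slot.commute_of {R : Type*} [Semiring R] [Algebra K R] (F : s.Alg σ →ₐ[K] R) (z : R)
    (h1 : ∀ a, Commute (F (s.φ σ a)) z) (h2 : ∀ γ, Commute (F (s.v σ γ)) z) (x : s.Alg σ) :
    Commute (F x) z := by
  induction x using Slot.alg_induction with
  | h a γ => rw [map_mul]; exact (h1 a).mul_left (h2 γ)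
  | h0 => rw [map_zero]; exact Commute.zero_left _
  | hadd x y hx hy => rw [map_add]; exact hx.add_left hy
  | hs c x hx => rw [map_smul]; exact hx.smul_left c

/-- coordinates -/
noncomputable def Slot.toAlg [Fintype (Γ ⧸ s.Λ)] : (Γ ⧸ s.Λ → s.fix σ) →ₗ[K] s.Alg σ where
  toFun a := ∑ q, s.φ σ (a q) * s.v σ q.out
  map_add' a b := by simp [add_mul, Finset.sum_add_distrib]
  map_smul' c a := by simp [Finset.smul_sum]

theorem Slot.toAlg_surjective [Fintype (Γ ⧸ s.Λ)] : Function.Surjective (s.toAlg σ) := by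
  classical
  rw [← LinearMap.range_eq_top, eq_top_iff, ← s.span_top σ, Submodule.span_le]
  rintro _ ⟨⟨a, γ⟩, rfl⟩
  have hl : (QuotientGroup.mk γ : Γ ⧸ s.Λ).out⁻¹ * γ ∈ s.Λ := by
    rw [← QuotientGroup.eq]; simp
  refine ⟨Pi.single (QuotientGroup.mk γ) ((s.τ ⟨_, hl⟩ : K) • a), ?_⟩
  simp only [Slot.toAlg, LinearMap.coe_mk, AddHom.coe_mk]
  rw [Finset.sum_eq_single (QuotientGroup.mk γ) (fun b _ hb => by simp [hb]) (by simp)]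
  have h2 := s.v_lam σ ⟨_, hl⟩
  have h3 : s.v σ γ = s.v σ (QuotientGroup.mk γ : Γ ⧸ s.Λ).out *
      s.v σ ((QuotientGroup.mk γ : Γ ⧸ s.Λ).out⁻¹ * γ) := by
    rw [← map_mul]; congr 1; group
  rw [h3, h2, ← Algebra.commutes, ← Algebra.smul_def]
  simp

end Alg


section Fun

variable {K M : Type u} [Field K] [Field M] [Algebra K M] {Γ : Type} [CommGroup Γ]
  (σ : Γ →* (M ≃ₐ[K] M)) {I : Type} [Fintype I] [DecidableEq I] (s : I → Slot K Γ)

/-- quasi-periodic functions -/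
def QP (M : Type u) [Field M] [Algebra K M] (s : I → Slot K Γ) : Submodule K ((I → Γ) → M) where
  carrier := {f | ∀ (l : ∀ i, (s i).Λ) (x : I → Γ),
    f (fun i => l i * x i) = (∏ i, ((s i).τ (l i) : K)) • f x}
  add_mem' := fun {f g} hf hg l x => by simp [hf l x, hg l x]
  zero_mem' := fun l x => by simp
  smul_mem' := fun c f hf l x => by
    simp only [Pi.smul_apply, hf l x]
    rw [smul_comm]

theorem QP.single (f : QP M s) (i : I) (l : (s i).Λ) (x : I → Γ) :
    f.1 (Pi.mulSingle i (l : Γ) * x) = ((s i).τ l : K) • f.1 x := by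
  have h := f.2 (Pi.mulSingle i l) x
  rw [Finset.prod_eq_single i (fun j _ hj => by simp [Pi.mulSingle_eq_of_ne hj]) (by simp)] at h
  rw [Pi.mulSingle_eq_same] at h
  rw [← h]
  refine congrArg f.1 (funext fun j => ?_)
  by_cases hj : j = i
  · subst hj; simp
  · simp [Pi.mulSingle_eq_of_ne hj]

theorem QP.out_mem (i : I) (γ : Γ) :
    γ * (QuotientGroup.mk γ : Γ ⧸ (s i).Λ).out⁻¹ ∈ (s i).Λ := by
  rw [mul_comm, ← QuotientGroup.eq]; simp

/-- coordinates on the function space -/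
noncomputable def QP.equiv : QP M s ≃ₗ[K] ((∀ i, Γ ⧸ (s i).Λ) → M) where
  toFun f q := f.1 (fun i => (q i).out)
  map_add' f g := rfl
  map_smul' c f := rfl
  invFun F := ⟨fun x => (∏ i, ((s i).τ ⟨_, QP.out_mem s i (x i)⟩ : K)) •
      F (fun i => QuotientGroup.mk (x i)), by
    intro l x
    have h : ∀ i, (QuotientGroup.mk ((l i : Γ) * x i) : Γ ⧸ (s i).Λ) = QuotientGroup.mk (x i) := by
      intro i
      rw [QuotientGroup.eq]
      have : (((l i : Γ) * x i)⁻¹ * x i) = ((l i)⁻¹ : (s i).Λ) := by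
        rw [mul_inv, mul_assoc, inv_mul_cancel, mul_one]; rfl
      rw [this]
      exact ((l i)⁻¹).2
    simp only [h]
    rw [smul_smul, ← Finset.prod_mul_distrib]
    congr 1
    refine Finset.prod_congr rfl fun i _ => ?_
    rw [← Units.val_mul, ← map_mul]
    congr 2
    apply Subtype.ext
    simp [h, mul_assoc]⟩
  left_inv f := by
    apply Subtype.ext
    funext x
    change (∏ i, ((s i).τ ⟨_, QP.out_mem s i (x i)⟩ : K)) •
      f.1 (fun i => (QuotientGroup.mk (x i) : Γ ⧸ (s i).Λ).out) = f.1 x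
    rw [← f.2]
    refine congrArg f.1 (funext fun j => ?_)
    simp
  right_inv F := by
    funext q
    have h : ∀ i h, (s i).τ ⟨1, h⟩ = 1 := fun i h => map_one _
    simp [h]

theorem QP.finrank [FiniteDimensional K M] [∀ i, (s i).Λ.FiniteIndex] :
    FiniteDimensional K (QP M s) ∧
    Module.finrank K (QP M s) = (∏ i, (s i).Λ.index) * Module.finrank K M := by
  have : ∀ i, Fintype (Γ ⧸ (s i).Λ) := fun i => Fintype.ofFinite _
  constructor
  · exact Module.Finite.equiv (QP.equiv (M := M) s).symm
  · rw [(QP.equiv (M := M) s).finrank_eq, Module.finrank_pi_fintype]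
    simp [Subgroup.index, Nat.card_eq_fintype_card]

/-- slot multiplication -/
noncomputable def QP.φ (i : I) : (s i).fix σ →ₐ[K] Module.End K (QP M s) where
  toFun a :=
    { toFun := fun f => ⟨fun x => σ (x i) a * f.1 x, by
        intro l x
        change σ (l i * x i) a * f.1 (fun i => l i * x i) = _ • (σ (x i) a * f.1 x)
        rw [f.2, mul_comm (l i : Γ), map_mul, AlgEquiv.mul_apply,
          Slot.mem_fix.1 a.2 _ (l i).2, mul_smul_comm]⟩
      map_add' := fun f g => by apply Subtype.ext; funext x; simp [mul_add]
      map_smul' := fun c g => by apply Subtype.ext; funext x; simp }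
  map_one' := by ext; simp
  map_mul' a b := by ext; simp [mul_assoc]
  map_zero' := by ext; simp
  map_add' a b := by ext; simp [add_mul]
  commutes' c := by ext; simp [Algebra.smul_def]

/-- slot shift -/
noncomputable def QP.v (i : I) : Γ →* Module.End K (QP M s) where
  toFun γ :=
    { toFun := fun f => ⟨fun x => f.1 (Pi.mulSingle i γ * x), by
        intro l x
        change f.1 (Pi.mulSingle i γ * fun i => (l i : Γ) * x i) = _ • f.1 _
        rw [← f.2]
        refine congrArg f.1 (funext fun j => ?_)
        simp [mul_left_comm]⟩
      map_add' := fun f g => by apply Subtype.ext; funext x; simp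
      map_smul' := fun c g => by apply Subtype.ext; funext x; simp }
  map_one' := by ext; simp
  map_mul' a b := by ext; simp [Pi.mulSingle_mul, mul_assoc, mul_left_comm]

theorem QP.φ_apply (i : I) (a) (f : QP M s) (x) : (QP.φ σ s i a f).1 x = σ (x i) a * f.1 x := rfl

theorem QP.v_apply (i : I) (γ) (f : QP M s) (x) :
    (QP.v s i γ f).1 x = f.1 (Pi.mulSingle i γ * x) := rfl

/-- slot action -/
noncomputable def QP.rho (i : I) : (s i).Alg σ →ₐ[K] Module.End K (QP M s) :=
  (s i).lift σ (QP.φ σ s i) (QP.v (M := M) s i)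
    (by
      intro γ a
      ext f x
      change σ ((Pi.mulSingle i γ : I → Γ) i * x i) a * f.1 _ = σ (x i) (σ γ a) * f.1 _
      rw [Pi.mulSingle_eq_same, mul_comm γ, map_mul, AlgEquiv.mul_apply])
    (by
      intro l
      ext f x
      rw [QP.v_apply, QP.single]
      simp [Algebra.smul_def])

theorem QP.rho_commute (i j : I) (h : i ≠ j) (a b) :
    Commute (QP.rho σ s i a) (QP.rho σ s j b) := by
  refine Slot.commute_of σ (s i) (QP.rho σ s i) _ (fun c => ?_) (fun γ => ?_) a
  · refine (Slot.commute_of σ (s j) (QP.rho σ s j) _ (fun d => ?_) (fun δ => ?_) b).symm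
    · simp only [QP.rho, Slot.lift_φ]
      ext f x
      simp [QP.φ_apply, mul_left_comm]
    · simp only [QP.rho, Slot.lift_φ, Slot.lift_v]
      ext f x
      simp [QP.φ_apply, QP.v_apply, Pi.mulSingle_eq_of_ne h]
  · refine (Slot.commute_of σ (s j) (QP.rho σ s j) _ (fun d => ?_) (fun δ => ?_) b).symm
    · simp only [QP.rho, Slot.lift_φ, Slot.lift_v]
      ext f x
      simp [QP.φ_apply, QP.v_apply, Pi.mulSingle_eq_of_ne h.symm]
    · simp only [QP.rho, Slot.lift_v]
      ext f x
      simp [QP.v_apply, mul_left_comm]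

section Diag

variable (T : Slot K Γ) (hT1 : ∀ l ∈ T.Λ, σ l = 1) (hT2 : ∀ i, T.Λ ≤ (s i).Λ)
  (hT3 : ∀ l : T.Λ, T.τ l * ∏ i, (s i).τ ⟨l, hT2 i l.2⟩ = 1)

/-- pointwise multiplication -/
noncomputable def QP.dφ : T.fix σ →ₐ[K] Module.End K (QP M s) where
  toFun a :=
    { toFun := fun f => ⟨fun x => a * f.1 x, by
        intro l x
        change (a : M) * f.1 (fun i => l i * x i) = _ • ((a : M) * f.1 x)
        rw [f.2, mul_smul_comm]⟩
      map_add' := fun f g => by apply Subtype.ext; funext x; simp [mul_add]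
      map_smul' := fun c g => by apply Subtype.ext; funext x; simp }
  map_one' := by ext; simp
  map_mul' a b := by ext; simp [mul_assoc]
  map_zero' := by ext; simp
  map_add' a b := by ext; simp [add_mul]
  commutes' c := by ext; simp [Algebra.smul_def]

/-- diagonal semilinear shift -/
noncomputable def QP.dv : Γ →* Module.End K (QP M s) where
  toFun γ :=
    { toFun := fun f => ⟨fun x => σ γ (f.1 (fun i => γ⁻¹ * x i)), by
        intro l x
        have := f.2 l (fun i => γ⁻¹ * x i)
        simp only [mul_left_comm (γ⁻¹)]
        rw [this, map_smul]⟩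
      map_add' := fun f g => by apply Subtype.ext; funext x; simp
      map_smul' := fun c g => by apply Subtype.ext; funext x; simp }
  map_one' := by ext; simp
  map_mul' a b := by ext; simp [mul_assoc, mul_left_comm]

theorem QP.dφ_apply (a) (f : QP M s) (x) : (QP.dφ σ s T a f).1 x = a * f.1 x := rfl

theorem QP.dv_apply (γ) (f : QP M s) (x) :
    (QP.dv σ s γ f).1 x = σ γ (f.1 (fun i => γ⁻¹ * x i)) := rfl

theorem QP.dlam (T : Slot K Γ) (hT1 : ∀ l ∈ T.Λ, σ l = 1) (hT2 : ∀ i, T.Λ ≤ (s i).Λ)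
  (hT3 : ∀ l : T.Λ, T.τ l * ∏ i, (s i).τ ⟨l, hT2 i l.2⟩ = 1) (l : T.Λ) : QP.dv (M := M) σ s l = algebraMap K _ (T.τ l : K) := by
  ext f x
  rw [QP.dv_apply, hT1 _ l.2]
  have h1 := f.2 (fun i => ⟨l, hT2 i l.2⟩) (fun i => (l : Γ)⁻¹ * x i)
  simp only [mul_inv_cancel_left] at h1
  have h2 := congrArg (Units.val) (hT3 l)
  simp only [Units.val_mul, Units.val_one, Units.coe_prod] at h2
  rw [AlgEquiv.one_apply]
  have h3 : f.1 (fun i => (l : Γ)⁻¹ * x i) = (T.τ l : K) • f.1 x := by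
    change _ = (T.τ l : K) • f.1 (fun i => x i)
    rw [h1, smul_smul, h2, one_smul]
  rw [h3]
  simp [Algebra.smul_def]

/-- diagonal action -/
noncomputable def QP.drho : T.Alg σ →ₐ[K] Module.End K (QP M s) :=
  T.lift σ (QP.dφ σ s T) (QP.dv σ s)
    (by
      intro γ a
      ext f x
      simp [QP.dφ_apply, QP.dv_apply, Slot.act])
    (QP.dlam σ s T hT1 hT2 hT3)

theorem QP.drho_commute (i : I) (a b) :
    Commute (QP.drho σ s T hT1 hT2 hT3 a) (QP.rho σ s i b) := by
  refine Slot.commute_of σ T (QP.drho σ s T hT1 hT2 hT3) _ (fun c => ?_) (fun γ => ?_) a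
  · refine (Slot.commute_of σ (s i) (QP.rho σ s i) _ (fun d => ?_) (fun δ => ?_) b).symm
    · simp only [QP.rho, QP.drho, Slot.lift_φ]
      ext f x
      simp [QP.φ_apply, QP.dφ_apply, mul_left_comm]
    · simp only [QP.rho, QP.drho, Slot.lift_φ, Slot.lift_v]
      ext f x
      simp [QP.dφ_apply, QP.v_apply]
  · refine (Slot.commute_of σ (s i) (QP.rho σ s i) _ (fun d => ?_) (fun δ => ?_) b).symm
    · simp only [QP.rho, QP.drho, Slot.lift_φ, Slot.lift_v]
      ext f x
      simp only [QP.φ_apply, QP.dv_apply, Module.End.mul_apply, map_mul]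
      have h : σ γ (σ (γ⁻¹ * x i) (d : M)) = σ (x i) d := by
        rw [← AlgEquiv.mul_apply, ← map_mul, mul_inv_cancel_left]
      rw [map_mul σ] at h
      rw [h]
    · simp only [QP.rho, QP.drho, Slot.lift_v]
      ext f x
      simp only [QP.v_apply, QP.dv_apply, Module.End.mul_apply]
      refine congrArg (fun z => σ γ (f.1 z)) (funext fun j => ?_)
      simp [mul_left_comm]

end Diag

end Fun


section Div

/-- a degree function on a field -/
structure Deg (M : Type u) [Field M] (G : Type) [AddCommGroup G] [LinearOrder G] where
  d : M → G
  mul : ∀ a b, a ≠ 0 → b ≠ 0 → d (a * b) = d a + d b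
  dom : ∀ {ι : Type} (t : Finset ι) (a : ι → M) (i0 : ι), i0 ∈ t → a i0 ≠ 0 →
    (∀ i ∈ t, i ≠ i0 → a i ≠ 0 → d (a i0) < d (a i)) → ∑ i ∈ t, a i ≠ 0

variable {K M : Type u} [Field K] [Field M] [Algebra K M] {Γ : Type} [CommGroup Γ]
  (σ : Γ →* (M ≃ₐ[K] M)) (s : Slot K Γ)
  {G : Type} [AddCommGroup G] [LinearOrder G] [IsOrderedAddMonoid G]

/-- compatibility of a slot with a degree function -/
structure Slot.Compat (D : Deg M G) (w : Γ →* Multiplicative G) : Prop where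
  inv : ∀ γ a, D.d (σ γ a) = D.d a
  tau : ∀ l : s.Λ, D.d (algebraMap K M (s.τ l : K)) = (w l).toAdd
  sep : ∀ γ a, a ≠ 0 → D.d a = (w γ).toAdd → γ ∈ s.Λ

variable {σ s} {D : Deg M G} {w : Γ →* Multiplicative G}

theorem Slot.Compat.shift (h : s.Compat σ D w) {f : Γ → M}
    (hf : ∀ (l : s.Λ) x, f (l * x) = (s.τ l : K) • f x) (l : s.Λ) (x : Γ) (hx : f x ≠ 0) :
    f (l * x) ≠ 0 ∧ D.d (f (l * x)) - (w (l * x)).toAdd = D.d (f x) - (w x).toAdd := by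
  have h0 : algebraMap K M (s.τ l : K) ≠ 0 := by simp
  rw [hf, Algebra.smul_def]
  refine ⟨mul_ne_zero h0 hx, ?_⟩
  rw [D.mul _ _ h0 hx, h.tau, map_mul, toAdd_mul]
  abel

theorem Slot.Compat.exists_min (h : s.Compat σ D w) [Finite (Γ ⧸ s.Λ)] {f : Γ → M}
    (hf : ∀ (l : s.Λ) x, f (l * x) = (s.τ l : K) • f x) (x0 : Γ) (hx : f x0 ≠ 0) :
    ∃ y0, f y0 ≠ 0 ∧ ∀ y, f y ≠ 0 → D.d (f y0) - (w y0).toAdd ≤ D.d (f y) - (w y).toAdd := by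
  classical
  have := Fintype.ofFinite (Γ ⧸ s.Λ)
  have key : ∀ y, f y ≠ 0 → f (QuotientGroup.mk y : Γ ⧸ s.Λ).out ≠ 0 ∧
      D.d (f (QuotientGroup.mk y : Γ ⧸ s.Λ).out) - (w (QuotientGroup.mk y : Γ ⧸ s.Λ).out).toAdd =
        D.d (f y) - (w y).toAdd := by
    intro y hy
    have hm : y⁻¹ * (QuotientGroup.mk y : Γ ⧸ s.Λ).out ∈ s.Λ := by
      rw [← QuotientGroup.eq]; simp
    have := h.shift hf ⟨_, hm⟩ y hy
    simpa [mul_assoc, mul_comm] using this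
  obtain ⟨q, hq, hmin⟩ := Finset.exists_min_image
    (Finset.univ.filter fun q : Γ ⧸ s.Λ => f q.out ≠ 0)
    (fun q => D.d (f q.out) - (w q.out).toAdd) ⟨QuotientGroup.mk x0, by simpa using (key x0 hx).1⟩
  refine ⟨q.out, by simpa using hq, fun y hy => ?_⟩
  rw [← (key y hy).2]
  exact hmin _ (by simpa using (key y hy).1)

theorem Slot.Compat.leading (h : s.Compat σ D w) [Fintype (Γ ⧸ s.Λ)] {f : Γ → M}
    (hf : ∀ (l : s.Λ) x, f (l * x) = (s.τ l : K) • f x) (x0 : Γ) (hx : f x0 ≠ 0)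
    (a : Γ ⧸ s.Λ → M) (ha : a ≠ 0) : ∃ y, ∑ q, σ y (a q) * f (q.out * y) ≠ 0 := by
  classical
  obtain ⟨y0, hy0, hmin⟩ := h.exists_min hf x0 hx
  obtain ⟨q1, hq1⟩ := Function.ne_iff.1 ha
  obtain ⟨q0, hq0, hqmin⟩ := Finset.exists_min_image
    (Finset.univ.filter fun q : Γ ⧸ s.Λ => a q ≠ 0)
    (fun q => D.d (a q) + (w q.out).toAdd) ⟨q1, by simpa using hq1⟩
  have hq0' : a q0 ≠ 0 := by simpa using hq0
  refine ⟨q0.out⁻¹ * y0, ?_⟩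
  have e0 : q0.out * (q0.out⁻¹ * y0) = y0 := by group
  have hinj : ∀ γ x, σ γ x ≠ 0 ↔ x ≠ 0 := fun γ x => by simp
  apply D.dom _ _ q0 (Finset.mem_univ _)
  · rw [e0]
    exact mul_ne_zero ((hinj _ _).2 hq0') hy0
  · intro q _ hq hne
    have h1 : a q ≠ 0 := (hinj _ _).1 (left_ne_zero_of_mul hne)
    have h2 := right_ne_zero_of_mul hne
    rw [e0, D.mul _ _ ((hinj _ _).2 hq0') hy0, D.mul _ _ ((hinj _ _).2 h1) h2, h.inv, h.inv]
    have h3 := hmin _ h2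
    have h4 : D.d (a q0) + (w q0.out).toAdd < D.d (a q) + (w q.out).toAdd := by
      refine lt_of_le_of_ne (hqmin q (by simpa using h1)) fun he => hq ?_
      have : q.out⁻¹ * q0.out ∈ s.Λ := by
        apply h.sep _ (a q * (a q0)⁻¹) (mul_ne_zero h1 (inv_ne_zero hq0'))
        have h5 := D.mul (a q * (a q0)⁻¹) (a q0) (mul_ne_zero h1 (inv_ne_zero hq0')) hq0'
        rw [inv_mul_cancel_right₀ hq0'] at h5
        rw [map_mul, map_inv, toAdd_mul, toAdd_inv]
        have h6 : D.d (a q * (a q0)⁻¹) = D.d (a q) - D.d (a q0) := by rw [h5]; abel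
        rw [h6, sub_eq_iff_eq_add]
        have h7 : D.d (a q) = D.d (a q0) + (w q0.out).toAdd - (w q.out).toAdd := by
          rw [he]; abel
        rw [h7]; abel
      rw [← QuotientGroup.eq] at this
      simpa using this
    have h5 : (w (q.out * (q0.out⁻¹ * y0))).toAdd =
      (w q.out).toAdd - (w q0.out).toAdd + (w y0).toAdd := by
      simp only [map_mul, map_inv, toAdd_mul, toAdd_inv]; abel
    rw [h5] at h3
    have h6 := add_lt_add_of_lt_of_le h4 h3
    have := add_lt_add_right h6 ((w y0).toAdd - (w q0.out).toAdd)
    convert this using 1 <;> abel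

theorem Slot.Compat.inj (h : s.Compat σ D w) [Fintype (Γ ⧸ s.Λ)]
    (a : Γ ⧸ s.Λ → s.fix σ) (ha : a ≠ 0) :
    Function.Injective (QP.rho σ (fun _ : Unit => s) () (s.toAlg σ a)) := by
  rw [← LinearMap.ker_eq_bot, LinearMap.ker_eq_bot']
  intro f hf
  by_contra hne
  obtain ⟨x, hx⟩ : ∃ x, f.1 x ≠ 0 := by
    by_contra! hall
    exact hne (Subtype.ext (funext hall))
  have hper : ∀ (l : s.Λ) x, f.1 (fun _ => l * x) = (s.τ l : K) • f.1 (fun _ => x) := by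
    intro l x
    have := f.2 (fun _ => l) (fun _ => x)
    simpa using this
  have hx' : f.1 (fun _ => x ()) ≠ 0 := hx
  obtain ⟨y, hy⟩ := h.leading (f := fun y => f.1 (fun _ => y)) hper (x ()) hx'
    (fun q => (a q : M)) (by
      intro h0
      apply ha
      funext q
      exact Subtype.ext (congrFun h0 q))
  apply hy
  have h2 := congrFun (congrArg Subtype.val hf) (fun _ => y)
  simp only [Slot.toAlg, LinearMap.coe_mk, AddHom.coe_mk, map_sum, map_mul, QP.rho, Slot.lift_φ,
    Slot.lift_v, LinearMap.sum_apply, Submodule.coe_sum, Finset.sum_apply] at h2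
  refine Eq.trans (Finset.sum_congr rfl fun q _ => ?_) h2
  change _ = σ y (a q) * f.1 _
  congr 2

/-- what we want to know about the algebra of a slot -/
structure Slot.Good (σ : Γ →* (M ≃ₐ[K] M)) (s : Slot K Γ) : Prop where
  dom : IsDomain (s.Alg σ)
  fin : FiniteDimensional K (s.Alg σ)
  rank : Module.finrank K (s.Alg σ) = s.Λ.index ^ 2
  central : Algebra.IsCentral K (s.Alg σ)

theorem Slot.Compat.good (h : s.Compat σ D w) [s.Λ.FiniteIndex] [FiniteDimensional K M]
    [IsGalois K M] (hσ : Function.Surjective σ) (hk : σ.ker ≤ s.Λ) : s.Good σ := by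
  classical
  have := Fintype.ofFinite (Γ ⧸ s.Λ)
  obtain ⟨hQ1, hQ2⟩ := QP.finrank (M := M) (fun _ : Unit => s)
  have hQ3 : 0 < Module.finrank K (QP M (fun _ : Unit => s)) := by
    rw [hQ2]
    refine Nat.mul_pos (Finset.prod_pos fun i _ => Nat.pos_of_ne_zero ?_) Module.finrank_pos
    exact Subgroup.FiniteIndex.index_ne_zero
  have hQ4 : Nontrivial (QP M (fun _ : Unit => s)) := Module.nontrivial_of_finrank_pos hQ3
  let ρ := QP.rho σ (fun _ : Unit => s) ()
  have hinj : ∀ x : s.Alg σ, x ≠ 0 → Function.Injective (ρ x) := by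
    intro x hx
    obtain ⟨a, rfl⟩ := s.toAlg_surjective σ x
    refine h.inj a ?_
    rintro rfl
    simp at hx
  have htinj : Function.Injective (s.toAlg σ) := by
    rw [← LinearMap.ker_eq_bot, LinearMap.ker_eq_bot']
    intro a ha
    by_contra hne
    have h1 := h.inj a hne
    rw [ha, map_zero] at h1
    obtain ⟨x, hx⟩ := exists_ne (0 : QP M (fun _ : Unit => s))
    exact hx (h1 rfl)
  have hne : Nontrivial (s.Alg σ) := by
    refine ⟨1, 0, fun h0 => ?_⟩
    obtain ⟨x, hx⟩ := exists_ne (0 : QP M (fun _ : Unit => s))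
    have h1 : ρ 1 x = ρ 0 x := by rw [h0]
    rw [map_one, map_zero] at h1
    exact hx h1
  let e := LinearEquiv.ofBijective (s.toAlg σ) ⟨htinj, s.toAlg_surjective σ⟩
  have hfix : (s.fix σ).fixingSubgroup = s.Λ.map σ := IntermediateField.fixingSubgroup_fixedField _
  have hφ : Function.Injective (s.φ σ) := (s.φ σ).toRingHom.injective
  refine ⟨?_, ?_, ?_, ?_⟩
  · have : NoZeroDivisors (s.Alg σ) := by
      refine ⟨fun {x y} hxy => ?_⟩
      by_contra! hc
      obtain ⟨z, hz⟩ := exists_ne (0 : QP M (fun _ : Unit => s))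
      have h1 : ρ (x * y) z = 0 := by rw [hxy, map_zero]; rfl
      rw [map_mul, Module.End.mul_apply] at h1
      exact hz (hinj y hc.2 ((hinj x hc.1 (h1.trans (map_zero _).symm)).trans (map_zero _).symm))
    exact NoZeroDivisors.to_isDomain _
  · exact Module.Finite.equiv e
  · rw [← e.finrank_eq, Module.finrank_pi_fintype]
    simp only [Finset.sum_const, Finset.card_univ, smul_eq_mul]
    rw [IntermediateField.finrank_eq_fixingSubgroup_index, hfix, Subgroup.index_map_eq _ hσ hk,
      sq, ← Nat.card_eq_fintype_card]
    rfl
  · refine ⟨fun x hx => ?_⟩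
    rw [Subalgebra.mem_center_iff] at hx
    obtain ⟨a, rfl⟩ := s.toAlg_surjective σ x
    have h1 : ∀ q, q ≠ QuotientGroup.mk 1 → a q = 0 := by
      intro q hq
      by_contra ha
      apply hq
      have h2 : ∀ b, b * a q = a q * s.act σ q.out b := by
        intro b
        have h3 : s.toAlg σ (fun q => b * a q) = s.toAlg σ (fun q => a q * s.act σ q.out b) := by
          have h4 := hx (s.φ σ b)
          simp only [Slot.toAlg, LinearMap.coe_mk, AddHom.coe_mk, map_mul] at h4 ⊢
          rw [Finset.mul_sum, Finset.sum_mul] at h4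
          simp only [mul_assoc, s.v_φ] at h4 ⊢
          exact h4
        exact congrFun (htinj h3) q
      have h5 : σ q.out ∈ (s.fix σ).fixingSubgroup := by
        rw [IntermediateField.mem_fixingSubgroup_iff]
        intro x hx
        have h6 := h2 ⟨x, hx⟩
        rw [mul_comm] at h6
        exact (congrArg Subtype.val (mul_left_cancel₀ ha h6)).symm
      rw [hfix] at h5
      obtain ⟨l, hl, hl2⟩ := h5
      have h6 : q.out ∈ s.Λ := by
        have h7 : l⁻¹ * q.out ∈ σ.ker := by
          rw [MonoidHom.mem_ker, map_mul, map_inv, hl2, inv_mul_cancel]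
        have := mul_mem hl (hk h7)
        simpa using this
      rw [← QuotientGroup.out_eq' q, QuotientGroup.eq]
      simpa using h6
    have h2 : s.toAlg σ a = s.φ σ (a (QuotientGroup.mk 1)) *
        s.v σ (QuotientGroup.mk 1 : Γ ⧸ s.Λ).out := by
      simp only [Slot.toAlg, LinearMap.coe_mk, AddHom.coe_mk]
      rw [Finset.sum_eq_single (QuotientGroup.mk 1)]
      · intro q _ hq
        rw [h1 q hq, map_zero, zero_mul]
      · simp
    have hm : (QuotientGroup.mk 1 : Γ ⧸ s.Λ).out ∈ s.Λ := by
      have : (1 : Γ)⁻¹ * (QuotientGroup.mk 1 : Γ ⧸ s.Λ).out ∈ s.Λ := by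
        rw [← QuotientGroup.eq]; simp
      simpa using this
    obtain ⟨c, hc⟩ : ∃ c, s.toAlg σ a = s.φ σ c := by
      refine ⟨(s.τ ⟨_, hm⟩ : K) • a (QuotientGroup.mk 1), ?_⟩
      rw [h2, s.v_lam σ ⟨_, hm⟩, ← Algebra.commutes, ← Algebra.smul_def, map_smul]
    rw [hc] at hx ⊢
    have h3 : ∀ γ, σ γ c = c := by
      intro γ
      have h4 := hx (s.v σ γ)
      rw [s.v_φ] at h4
      have h5 : s.φ σ (s.act σ γ c) * s.v σ γ * s.v σ γ⁻¹ = s.φ σ c * s.v σ γ * s.v σ γ⁻¹ := by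
        rw [h4]
      rw [mul_assoc, mul_assoc, ← map_mul, mul_inv_cancel, map_one, mul_one, mul_one] at h5
      exact congrArg Subtype.val (hφ h5)
    have h4 : (c : M) ∈ (⊥ : IntermediateField K M) := by
      rw [IsGalois.mem_bot_iff_fixed]
      intro g
      obtain ⟨γ, rfl⟩ := hσ g
      exact h3 γ
    obtain ⟨z, hz⟩ := IntermediateField.mem_bot.1 h4
    have h5 : c = algebraMap K _ z := Subtype.ext hz.symm
    rw [h5, AlgHom.commutes]
    exact Subalgebra.algebraMap_mem _ _

/-- inverse slot -/
def Slot.inv (s : Slot K Γ) : Slot K Γ := ⟨s.Λ, s.τ⁻¹⟩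

theorem Slot.act_inv (σ : Γ →* (M ≃ₐ[K] M)) (s : Slot K Γ) (γ : Γ) (a) :
    s.act σ γ⁻¹ (s.act σ γ a) = a := by
  apply Subtype.ext
  change σ γ⁻¹ (σ γ a) = a
  rw [← AlgEquiv.mul_apply, ← map_mul, inv_mul_cancel, map_one, AlgEquiv.one_apply]

/-- field embedding into the opposite algebra -/
noncomputable def Slot.opφ (σ : Γ →* (M ≃ₐ[K] M)) (s : Slot K Γ) :
    s.fix σ →ₐ[K] (s.inv.Alg σ)ᵐᵒᵖ :=
  AlgHom.ofLinearMap ((MulOpposite.opLinearEquiv K).toLinearMap ∘ₗ (s.inv.φ σ).toLinearMap)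
    (by
      change MulOpposite.op (s.inv.φ σ 1) = 1
      rw [map_one]; rfl)
    (fun a b => by
      change MulOpposite.op (s.inv.φ σ (a * b)) =
        MulOpposite.op (s.inv.φ σ a) * MulOpposite.op (s.inv.φ σ b)
      rw [← MulOpposite.op_mul, mul_comm]
      exact congrArg MulOpposite.op (map_mul (s.inv.φ σ) _ _))

/-- the inverse slot gives the opposite algebra -/
noncomputable def Slot.opHom (σ : Γ →* (M ≃ₐ[K] M)) (s : Slot K Γ) :
    s.Alg σ →ₐ[K] (s.inv.Alg σ)ᵐᵒᵖ :=
  s.lift σ (s.opφ σ)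
    { toFun := fun γ => MulOpposite.op (s.inv.v σ γ⁻¹)
      map_one' := by simp
      map_mul' := fun a b => by
        rw [← MulOpposite.op_mul, ← map_mul, mul_inv, mul_comm] }
    (by
      intro γ a
      change MulOpposite.op (s.inv.v σ γ⁻¹) * MulOpposite.op (s.inv.φ σ a) =
        MulOpposite.op (s.inv.φ σ (s.inv.act σ γ a)) * MulOpposite.op (s.inv.v σ γ⁻¹)
      rw [← MulOpposite.op_mul, ← MulOpposite.op_mul, s.inv.v_φ]
      have := s.inv.act_inv σ γ a
      rw [this])
    (by
      intro l
      change MulOpposite.op (s.inv.v σ (l⁻¹ : s.Λ)) = _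
      have h := s.inv.v_lam σ (l⁻¹ : s.Λ)
      rw [h]
      have h2 : s.inv.τ (l⁻¹ : s.Λ) = s.τ l := by
        change (s.τ (l⁻¹))⁻¹ = s.τ l
        rw [map_inv, inv_inv]
      rw [h2]
      rfl)

end Div


section Inst

/-- permutation action on polynomials -/
noncomputable def renAct (k : Type u) [Field k] (G : Type) [Group G] :
    G →* RingAut (MvPolynomial G k) where
  toFun g := (MvPolynomial.renameEquiv k (Equiv.mulLeft g)).toRingEquiv
  map_one' := by
    refine RingEquiv.ext fun x => ?_
    have h : MvPolynomial.rename (fun x : G => 1 * x) x = x := by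
      simp only [one_mul]
      exact MvPolynomial.rename_id_apply x
    exact h
  map_mul' g h := by
    refine RingEquiv.ext fun x => ?_
    have h1 : MvPolynomial.rename (fun x : G => g * h * x) x =
        MvPolynomial.rename (fun x => g * x) (MvPolynomial.rename (fun x => h * x) x) := by
      rw [MvPolynomial.rename_rename]
      congr 2
      funext y
      exact mul_assoc _ _ _
    exact h1

theorem renAct_apply (k : Type u) [Field k] (G : Type) [Group G] (g : G) (x) :
    renAct k G g x = MvPolynomial.rename (fun x => g * x) x := rfl

theorem exists_faithful (k : Type u) [Field k] (G : Type) [Group G] :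
    ∃ (M0 : Type u) (_ : Field M0) (_ : Algebra k M0) (act : G →* RingAut M0),
      Function.Injective act ∧ ∀ g c, act g (algebraMap k M0 c) = algebraMap k M0 c := by
  classical
  let R := MvPolynomial G k
  let ren : G →* RingAut R := renAct k G
  refine ⟨FractionRing R, inferInstance, inferInstance,
    (IsFractionRing.ringEquivOfRingEquivHom R (FractionRing R)).comp ren, ?_, ?_⟩
  · intro g h hgh
    have h1 := congrArg (fun e : RingAut (FractionRing R) =>
      e (algebraMap R _ (MvPolynomial.X 1))) hgh
    simp only [MonoidHom.comp_apply, IsFractionRing.ringEquivOfRingEquivHom_apply,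
      IsFractionRing.ringEquivOfRingEquiv_algebraMap] at h1
    have h2 := IsFractionRing.injective R (FractionRing R) h1
    rw [renAct_apply, renAct_apply, MvPolynomial.rename_X, MvPolynomial.rename_X] at h2
    simpa using MvPolynomial.X_injective h2
  · intro g c
    rw [IsScalarTower.algebraMap_apply k R (FractionRing R)]
    simp only [MonoidHom.comp_apply, IsFractionRing.ringEquivOfRingEquivHom_apply,
      IsFractionRing.ringEquivOfRingEquiv_algebraMap]
    congr 1
    rw [renAct_apply]
    exact AlgHom.commutes (MvPolynomial.rename _) c

/-- value group -/
abbrev VG (r : ℕ) := Lex (Fin r → ℤ)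

/-- scaling -/
def scale {r : ℕ} (n : Fin r → ℕ) (x : VG r) : VG r := toLex (fun j => n j * ofLex x j)

theorem scale_add {r : ℕ} (n : Fin r → ℕ) (x y : VG r) :
    scale n (x + y) = scale n x + scale n y := by
  unfold scale
  apply ofLex.injective
  funext j
  exact mul_add _ _ _

theorem scale_lt {r : ℕ} (n : Fin r → ℕ) (hn : ∀ j, 0 < n j) (x y : VG r) (h : scale n x < scale n y) : x < y := by
  obtain ⟨i, h1, h2⟩ := h
  refine ⟨i, fun j hj => ?_, ?_⟩
  · have := h1 j hj
    have hj := hn j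
    simp [scale] at this
    rcases this with h | h
    · exact h
    · omega
  · simp only [scale] at h2
    exact lt_of_mul_lt_mul_left h2 (by positivity)

/-- the degree on Hahn series -/
noncomputable def hahnDeg {r : ℕ} (n : Fin r → ℕ) (hn : ∀ j, 0 < n j) (M0 : Type u) [Field M0] :
    Deg (HahnSeries (VG r) M0) (VG r) where
  d x := scale n x.order
  mul a b ha hb := by rw [HahnSeries.order_mul ha hb, scale_add]
  dom := by
    intro ι t a i0 hi0 h0 h hsum
    have h1 := congrArg (fun z : HahnSeries (VG r) M0 => z.coeff (a i0).order) hsum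
    simp only [HahnSeries.coeff_zero, HahnSeries.coeff_sum] at h1
    rw [Finset.sum_eq_single i0] at h1
    · exact h0 (HahnSeries.coeff_order_eq_zero.1 h1)
    · intro i hi hne
      by_cases hz : a i = 0
      · rw [hz]; rfl
      · exact HahnSeries.coeff_eq_zero_of_lt_order (scale_lt n hn _ _ (h i hi hne hz))
    · exact fun h => absurd hi0 h

/-- coefficientwise automorphisms -/
noncomputable def hahnAut (r : ℕ) (M0 : Type u) [Field M0] :
    RingAut M0 →* RingAut (HahnSeries (VG r) M0) where
  toFun e :=
    { toFun := fun x => x.map e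
      invFun := fun x => x.map e.symm
      left_inv := fun x => by ext; simp
      right_inv := fun x => by ext; simp
      map_mul' := fun x y => HahnSeries.map_mul (e : M0 →ₙ+* M0)
      map_add' := fun x y => HahnSeries.map_add (e : M0 →+ M0) }
  map_one' := by ext; rfl
  map_mul' a b := by ext; rfl

theorem hahnAut_coeff (r : ℕ) (M0 : Type u) [Field M0] (e : RingAut M0) (x) (i) :
    (hahnAut r M0 e x).coeff i = e (x.coeff i) := rfl

theorem hahnAut_order (r : ℕ) (M0 : Type u) [Field M0] (e : RingAut M0) (x) :
    (hahnAut r M0 e x).order = x.order := by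
  by_cases hx : x = 0
  · rw [hx, map_zero]
  have h : ∀ (e : RingAut M0) x, x ≠ 0 → (hahnAut r M0 e x).order ≤ x.order := by
    intro e x hx
    apply HahnSeries.order_le_of_coeff_ne_zero
    rw [hahnAut_coeff]
    simpa [HahnSeries.coeff_order_eq_zero] using hx
  apply le_antisymm (h e x hx)
  have h2 := h e⁻¹ (hahnAut r M0 e x) (by simpa using hx)
  rwa [← RingAut.mul_apply, ← map_mul, inv_mul_cancel, map_one] at h2

end Inst


section Inst2

/-- the lattice -/
abbrev Lat (r : ℕ) := Multiplicative (Fin r → ℤ)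

/-- the subgroup attached to exponents -/
def lamSub {r : ℕ} (n : Fin r → ℕ) (κ : Fin r → ℤ) : Subgroup (Lat r) where
  carrier := {γ | ∀ j, (n j : ℤ) ∣ κ j * γ.toAdd j}
  mul_mem' := fun {a b} ha hb j => by
    rw [toAdd_mul, Pi.add_apply, mul_add]
    exact dvd_add (ha j) (hb j)
  one_mem' := fun j => by simp
  inv_mem' := fun {a} ha j => by
    rw [toAdd_inv, Pi.neg_apply, mul_neg, dvd_neg]
    exact ha j

theorem mem_lamSub {r : ℕ} {n : Fin r → ℕ} {κ : Fin r → ℤ} {γ : Lat r} :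
    γ ∈ lamSub n κ ↔ ∀ j, (n j : ℤ) ∣ κ j * γ.toAdd j := Iff.rfl

/-- reduction -/
def redHom {r : ℕ} (m : Fin r → ℕ) : Lat r →* Multiplicative (∀ j, ZMod (m j)) where
  toFun γ := Multiplicative.ofAdd fun j => ((γ.toAdd j : ℤ) : ZMod (m j))
  map_one' := by
    apply Multiplicative.toAdd.injective; funext j; simp
  map_mul' a b := by
    apply Multiplicative.toAdd.injective; funext j; simp

theorem redHom_surjective {r : ℕ} (m : Fin r → ℕ) : Function.Surjective (redHom m) := by
  intro g
  refine ⟨Multiplicative.ofAdd fun j => (ZMod.intCast_surjective (g.toAdd j)).choose, ?_⟩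
  apply Multiplicative.toAdd.injective; funext j
  exact (ZMod.intCast_surjective (g.toAdd j)).choose_spec

theorem mem_redHom_ker {r : ℕ} (m : Fin r → ℕ) (γ : Lat r) :
    redHom m γ = 1 ↔ ∀ j, (m j : ℤ) ∣ γ.toAdd j := by
  constructor
  · intro h j
    have := congrFun (congrArg Multiplicative.toAdd h) j
    exact (ZMod.intCast_zmod_eq_zero_iff_dvd _ _).1 this
  · intro h
    apply Multiplicative.toAdd.injective; funext j
    exact (ZMod.intCast_zmod_eq_zero_iff_dvd _ _).2 (h j)

theorem dvd_aux (n : ℕ) (hn : 0 < n) (κ γ : ℤ) :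
    (n : ℤ) ∣ κ * γ ↔ ((n / n.gcd κ.natAbs : ℕ) : ℤ) ∣ γ := by
  rw [← Int.natAbs_dvd_natAbs, ← Int.natAbs_dvd_natAbs, Int.natAbs_mul, Int.natAbs_natCast,
    Int.natAbs_natCast]
  have hg : 0 < n.gcd κ.natAbs := Nat.gcd_pos_of_pos_left _ hn
  obtain ⟨g, n', k', hgp, hcop, h1, h2⟩ := Nat.exists_coprime' (m := n) (n := κ.natAbs) hg
  rw [h1, h2, Nat.gcd_mul_right, hcop, one_mul, Nat.mul_div_cancel _ hgp, mul_right_comm]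
  rw [Nat.mul_dvd_mul_iff_right hgp]
  exact hcop.dvd_mul_left

theorem lamSub_eq {r : ℕ} (n : Fin r → ℕ) (hn : ∀ j, 0 < n j) (κ : Fin r → ℤ) :
    lamSub n κ = (redHom fun j => n j / (n j).gcd (κ j).natAbs).ker := by
  ext γ
  rw [MonoidHom.mem_ker, mem_redHom_ker, mem_lamSub]
  exact forall_congr' fun j => dvd_aux _ (hn j) _ _

theorem lamSub_index {r : ℕ} (n : Fin r → ℕ) (hn : ∀ j, 0 < n j) (κ : Fin r → ℤ) :
    (lamSub n κ).index = ∏ j, n j / (n j).gcd (κ j).natAbs := by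
  rw [lamSub_eq n hn, Subgroup.index_ker, MonoidHom.range_eq_top_of_surjective _
    (redHom_surjective _)]
  rw [Subgroup.card_top, Nat.card_congr Multiplicative.toAdd, Nat.card_pi]
  simp

theorem quo_pos (n : ℕ) (hn : 0 < n) (m : ℕ) : 0 < n / n.gcd m :=
  Nat.div_pos (Nat.gcd_le_left _ hn) (Nat.gcd_pos_of_pos_left _ hn)

theorem lamSub_finite {r : ℕ} (n : Fin r → ℕ) (hn : ∀ j, 0 < n j) (κ : Fin r → ℤ) :
    (lamSub n κ).FiniteIndex := by
  refine ⟨?_⟩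
  rw [lamSub_index n hn]
  exact (Finset.prod_pos fun j _ => quo_pos _ (hn j) _).ne'

variable {K : Type u} [Field K]

/-- the slot attached to exponents -/
noncomputable def kslot {r : ℕ} (n : Fin r → ℕ) (θ : Lat r →* Kˣ) (κ : Fin r → ℤ) :
    Slot K (Lat r) where
  Λ := lamSub n κ
  τ :=
    { toFun := fun l => θ (Multiplicative.ofAdd fun j => -(κ j * l.1.toAdd j / n j))
      map_one' := by
        rw [← map_one θ]
        congr 1
        apply Multiplicative.toAdd.injective; funext j
        simp
      map_mul' := fun a b => by
        rw [← map_mul θ]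
        congr 1
        apply Multiplicative.toAdd.injective; funext j
        have := a.2 j
        simp only [Subgroup.coe_mul, toAdd_mul, Pi.add_apply, mul_add, toAdd_ofAdd]
        rw [Int.add_ediv_of_dvd_left this, neg_add] }

theorem exists_setup (k : Type u) [Field k] (r : ℕ) (n : Fin r → ℕ) (hn : ∀ j, 0 < n j) :
    ∃ (K M : Type u) (_ : Field K) (_ : Field M) (_ : Algebra k K) (_ : Algebra K M)
      (σ : Lat r →* (M ≃ₐ[K] M)) (θ : Lat r →* Kˣ), FiniteDimensional K M ∧ IsGalois K M ∧
      Function.Surjective σ ∧ (∀ γ, σ γ = 1 ↔ ∀ j, (n j : ℤ) ∣ γ.toAdd j) ∧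
      ∀ κ, (kslot n θ κ).Good σ := by
  classical
  have : ∀ j, NeZero (n j) := fun j => ⟨(hn j).ne'⟩
  let G := Multiplicative (∀ j, ZMod (n j))
  obtain ⟨M0, i1, i2, act, hinj, hact⟩ := exists_faithful k G
  let M := HahnSeries (VG r) M0
  let _ : MulSemiringAction G M := MulSemiringAction.compHom M ((hahnAut r M0).comp act)
  have hsm : ∀ (g : G) (x : M), g • x = hahnAut r M0 (act g) x := fun g x => rfl
  have : FaithfulSMul G M := ⟨fun {g h} hgh => hinj (RingEquiv.ext fun x => by
    have := congrArg (fun z : M => z.coeff 0) (hgh (HahnSeries.C x))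
    simp only [hsm, hahnAut_coeff] at this
    simpa using this)⟩
  have : Fintype G := Fintype.ofFinite G
  let K := FixedPoints.subfield G M
  let ι : k →+* K := (HahnSeries.C.comp (algebraMap k M0)).codRestrict K (by
    intro c g
    ext i
    rw [hsm, hahnAut_coeff]
    simp only [RingHom.comp_apply, HahnSeries.C_apply, HahnSeries.coeff_single]
    split_ifs
    · exact hact _ _
    · exact map_zero _)
  let σ : Lat r →* (M ≃ₐ[K] M) := (MulSemiringAction.toAlgAut G K M).comp (redHom n)
  have hσ : ∀ γ x, σ γ x = hahnAut r M0 (act (redHom n γ)) x := fun γ x => rfl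
  let θ0 : Lat r →* K :=
    { toFun := fun x => ⟨HahnSeries.single (toLex x.toAdd) 1, by
        intro g
        ext i
        rw [hsm, hahnAut_coeff]
        simp only [HahnSeries.coeff_single]
        split_ifs
        · exact map_one _
        · exact map_zero _⟩
      map_one' := Subtype.ext rfl
      map_mul' := fun a b => Subtype.ext (by
        change HahnSeries.single _ _ = HahnSeries.single _ _ * HahnSeries.single _ _
        rw [HahnSeries.single_mul_single, one_mul]
        rfl) }
  have hsurj : Function.Surjective σ :=
    (FixedPoints.toAlgAut_surjective G M).comp (redHom_surjective n)
  have hker : ∀ γ, σ γ = 1 ↔ ∀ j, (n j : ℤ) ∣ γ.toAdd j := by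
    intro γ
    rw [← mem_redHom_ker]
    constructor
    · intro h
      exact (FixedPoints.toAlgAutMulEquiv G M).injective (h.trans (map_one _).symm)
    · intro h
      change MulSemiringAction.toAlgAut G K M (redHom n γ) = 1
      rw [h, map_one]
  refine ⟨K, M, inferInstance, inferInstance, ι.toAlgebra, inferInstance, σ, θ0.toHomUnits,
    inferInstance, inferInstance, hsurj, hker, fun κ => ?_⟩
  let w : Lat r →* Multiplicative (VG r) :=
    { toFun := fun γ => Multiplicative.ofAdd (toLex fun j => -(κ j * γ.toAdd j))
      map_one' := by
        apply Multiplicative.toAdd.injective; apply ofLex.injective; funext j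
        change -(κ j * 0) = (0 : ℤ)
        simp
      map_mul' := fun a b => by
        apply Multiplicative.toAdd.injective; apply ofLex.injective; funext j
        change -(κ j * (a.toAdd j + b.toAdd j)) = -(κ j * a.toAdd j) + -(κ j * b.toAdd j)
        ring }
  have hc : (kslot n θ0.toHomUnits κ).Compat σ (hahnDeg n hn M0) w := by
    refine ⟨?_, ?_, ?_⟩
    · intro γ a
      change scale n (σ γ a).order = scale n a.order
      rw [hσ, hahnAut_order]
    · intro l
      change scale n (HahnSeries.single
        (toLex fun j => -(κ j * l.1.toAdd j / n j)) (1 : M0)).order = _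
      rw [HahnSeries.order_single one_ne_zero]
      apply ofLex.injective
      funext j
      change (n j : ℤ) * -(κ j * l.1.toAdd j / n j) = -(κ j * l.1.toAdd j)
      rw [mul_neg, Int.mul_ediv_cancel' (l.2 j)]
    · intro γ a _ h j
      have h2 : (n j : ℤ) * ofLex a.order j = -(κ j * γ.toAdd j) := congrFun (congrArg ofLex h) j
      have h3 : (n j : ℤ) ∣ -(κ j * γ.toAdd j) := ⟨_, h2.symm⟩
      exact (dvd_neg.1 h3)
  have : (kslot n θ0.toHomUnits κ).Λ.FiniteIndex := lamSub_finite n hn κ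
  refine hc.good hsurj ?_
  intro γ hγ j
  exact Dvd.dvd.mul_left ((hker γ).1 hγ j) _

end Inst2


section Pi

variable {K : Type u} [Field K]

theorem list_mul {R : Type*} [Monoid R] : ∀ {m : ℕ} (x y : Fin m → R)
    (_ : ∀ i j, i ≠ j → Commute (x i) (y j)),
    (List.ofFn (fun i => x i * y i)).prod = (List.ofFn x).prod * (List.ofFn y).prod := by
  intro m
  induction m with
  | zero => intro x y h; simp
  | succ m ih =>
    intro x y h
    simp only [List.ofFn_succ, List.prod_cons]
    rw [ih (fun i => x i.succ) (fun i => y i.succ) (fun i j hij => h _ _ (by simpa using hij))]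
    have h1 : Commute (y 0) (List.ofFn fun i : Fin m => x i.succ).prod := by
      apply Commute.list_prod_right
      intro z hz
      rw [List.mem_ofFn] at hz
      obtain ⟨i, rfl⟩ := hz
      exact (h _ _ (Fin.succ_ne_zero i)).symm
    simp only [mul_assoc]
    rw [← mul_assoc (y 0), h1.eq, mul_assoc]

/-- the hom from a tensor product given by a commuting family -/
theorem exists_piHom {R : Type*} [Semiring R] [Algebra K R] {m : ℕ} (A : Fin m → Type u)
    [∀ i, Ring (A i)] [∀ i, Algebra K (A i)] (f : ∀ i, A i →ₐ[K] R)
    (hf : ∀ i j, i ≠ j → ∀ x y, Commute (f i x) (f j y)) :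
    ∃ F : (⨂[K] i, A i) →ₐ[K] R, ∀ z, (∀ i a, Commute z (f i a)) → ∀ x, Commute z (F x) := by
  let g : MultilinearMap K A R :=
    (MultilinearMap.mkPiAlgebraFin K m R).compLinearMap (fun i => (f i).toLinearMap)
  have hg : ∀ x, g x = (List.ofFn fun i => f i (x i)).prod := fun x => by
    simp [g]
  have h1 : g 1 = 1 := by
    rw [hg]
    simp
  have h2 : ∀ x y, g (x * y) = g x * g y := by
    intro x y
    rw [hg, hg, hg, ← list_mul]
    · simp
    · exact fun i j hij => hf i j hij _ _
  refine ⟨PiTensorProduct.liftAlgHom g h1 h2, ?_⟩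
  · intro z hz x
    induction x using PiTensorProduct.induction_on with
    | smul_tprod c a =>
      rw [map_smul]
      refine Commute.smul_right ?_ c
      have : PiTensorProduct.liftAlgHom g h1 h2 (PiTensorProduct.tprod K a) = g a :=
        PiTensorProduct.lift.tprod a
      rw [this, hg]
      apply Commute.list_prod_right
      intro w hw
      rw [List.mem_ofFn] at hw
      obtain ⟨i, rfl⟩ := hw
      exact hz _ _
    | add x y hx hy => rw [map_add]; exact hx.add_right hy

theorem single_commute {ι : Type} [DecidableEq ι] (A : ι → Type u)
    [∀ i, Ring (A i)] [∀ i, Algebra K (A i)] (i j : ι) (h : i ≠ j) (x : A i) (y : A j) :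
    Commute (PiTensorProduct.singleAlgHom (R := K) i x) (PiTensorProduct.singleAlgHom (R := K) j y) := by
  rw [PiTensorProduct.singleAlgHom_apply, PiTensorProduct.singleAlgHom_apply]
  change _ * _ = _ * _
  rw [PiTensorProduct.tprod_mul_tprod, PiTensorProduct.tprod_mul_tprod]
  exact congrArg _ (Pi.mulSingle_commute h x y)

theorem pi_finrank {ι : Type} [Fintype ι] (A : ι → Type u)
    [∀ i, AddCommGroup (A i)] [∀ i, Module K (A i)] [∀ i, FiniteDimensional K (A i)] :
    FiniteDimensional K (⨂[K] i, A i) ∧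
    Module.finrank K (⨂[K] i, A i) = ∏ i, Module.finrank K (A i) := by
  classical
  let b := Basis.piTensorProduct (fun i => Module.finBasis K (A i))
  constructor
  · exact Module.Finite.of_basis b
  · rw [Module.finrank_eq_card_basis b]
    simp

/-- scalar operators commute with matrices whose entries commute with them -/
theorem scalar_comm' {R : Type*} [Semiring R] {t : ℕ} (z : R) (X : Matrix (Fin t) (Fin t) R)
    (h : ∀ i j, Commute z (X i j)) : Commute (Matrix.scalar (Fin t) z) X := by
  rw [Matrix.scalar_commute_iff]
  ext i j
  exact h i j

end Pi


section Assembly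

variable {K : Type u} [Field K]

theorem arith (t x y δ s v b : ℕ) (hs : 0 < s) (hy : 0 < y) (hδ : 0 < δ) (hb : 0 < b)
    (h1 : t * (x * y * δ) = y ^ 2 * (s * v)) (h2 : s * s * (b * y ^ 2) = t * t * x ^ 2)
    (h3 : b ∣ v) (h4 : δ ^ 2 ∣ v) : b = δ ^ 2 := by
  have h5 : t * x * δ = y * s * v := by
    apply Nat.eq_of_mul_eq_mul_left hy
    linarith
  have h6 : b * δ ^ 2 = v ^ 2 := by
    have hp : 0 < y ^ 2 * s ^ 2 := by positivity
    apply Nat.eq_of_mul_eq_mul_left hp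
    calc y ^ 2 * s ^ 2 * (b * δ ^ 2) = (s * s * (b * y ^ 2)) * δ ^ 2 := by ring
      _ = (t * x * δ) ^ 2 := by rw [h2]; ring
      _ = y ^ 2 * s ^ 2 * v ^ 2 := by rw [h5]; ring
  apply Nat.dvd_antisymm
  · obtain ⟨c, rfl⟩ := h3
    refine ⟨c ^ 2, Nat.eq_of_mul_eq_mul_left hb ?_⟩
    rw [h6]; ring
  · obtain ⟨c, rfl⟩ := h4
    have hp : 0 < δ ^ 2 := by positivity
    refine ⟨c ^ 2, Nat.eq_of_mul_eq_mul_left hp ?_⟩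
    rw [mul_comm, h6]; ring

theorem assembly {r : ℕ} (p q n : Fin r → ℕ) (hn : ∀ j, 0 < n j) (δ : ℕ) (hδ : 0 < δ)
    (A : Fin r → Type u) [∀ j, DivisionRing (A j)] [∀ j, Algebra K (A j)]
    [∀ j, FiniteDimensional K (A j)] [∀ j, Algebra.IsCentral K (A j)]
    (hA : ∀ j, Module.finrank K (A j) = n j ^ 2)
    (D : Type u) [DivisionRing D] [Algebra K D] (hD : Module.finrank K D = δ ^ 2)
    (S : Type u) [AddCommGroup S] [Module K S] [FiniteDimensional K S]
    (hS : Module.finrank K S = (∏ j, n j ^ p j) * (∏ j, n j ^ q j) * δ)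
    (f : ∀ j, Fin (p j) → (A j →ₐ[K] Module.End K S))
    (g : ∀ j, Fin (q j) → ((A j)ᵐᵒᵖ →ₐ[K] Module.End K S))
    (h : D →ₐ[K] Module.End K S)
    (hff1 : ∀ j a b, a ≠ b → ∀ x y, Commute (f j a x) (f j b y))
    (hff2 : ∀ i j, i ≠ j → ∀ a b x y, Commute (f i a x) (f j b y))
    (hgg1 : ∀ j a b, a ≠ b → ∀ x y, Commute (g j a x) (g j b y))
    (hgg2 : ∀ i j, i ≠ j → ∀ a b x y, Commute (g i a x) (g j b y))
    (hfg : ∀ i j a b x y, Commute (f i a x) (g j b y))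
    (hfh : ∀ i a x y, Commute (f i a x) (h y))
    (hgh : ∀ i a x y, Commute (g i a x) (h y))
    (B : Type u) [DivisionRing B] [Algebra K B] [FiniteDimensional K B]
    (s t : ℕ) (hs : 0 < s) (ht : 0 < t)
    (Φ : Matrix (Fin s) (Fin s) (B ⊗[K] (⨂[K] j, (⨂[K] (_ : Fin (q j)), A j))) ≃ₐ[K]
              Matrix (Fin t) (Fin t) (⨂[K] j, (⨂[K] (_ : Fin (p j)), A j))) :
    Module.finrank K B = δ ^ 2 := by
  classical
  let P := ⨂[K] j, (⨂[K] (_ : Fin (p j)), A j)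
  let Q := ⨂[K] j, (⨂[K] (_ : Fin (q j)), A j)
  -- the action of `P` on `S`
  have hin : ∀ j, ∃ F : (⨂[K] (_ : Fin (p j)), A j) →ₐ[K] Module.End K S,
      ∀ z, (∀ i a, Commute z (f j i a)) → ∀ x, Commute z (F x) := fun j =>
    exists_piHom (fun _ : Fin (p j) => A j) (f j) (hff1 j)
  choose F1 hF1 using hin
  obtain ⟨F, hF⟩ := exists_piHom (fun j => ⨂[K] (_ : Fin (p j)), A j) F1 (by
    intro i j hij x y
    apply hF1
    intro b y
    apply Commute.symm
    apply hF1
    intro a x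
    exact (hff2 i j hij a b x y).symm)
  have hF' : ∀ z, (∀ j i a, Commute z (f j i a)) → ∀ x, Commute z (F x) := fun z hz =>
    hF z fun j => hF1 j z (hz j)
  -- matrices
  let W : Matrix (Fin t) (Fin t) (Module.End K S) →ₐ[K] Module.End K (Fin t → S) :=
    (endVecAlgEquivMatrixEnd (Fin t) K K S).symm.toAlgHom
  let H : Matrix (Fin s) (Fin s) (B ⊗[K] Q) →ₐ[K] Module.End K (Fin t → S) :=
    W.comp ((AlgHom.mapMatrix F).comp Φ.toAlgHom)
  let Δ : Module.End K S →ₐ[K] Module.End K (Fin t → S) :=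
    W.comp (Matrix.scalarAlgHom (Fin t) K)
  have hΔ : ∀ z, (∀ j i a, Commute z (f j i a)) → ∀ X, Commute (Δ z) (H X) := by
    intro z hz X
    refine Commute.map (f := W) ?_
    apply scalar_comm'
    intro i j
    exact hF' z hz _
  let sc : (B ⊗[K] Q) →ₐ[K] Matrix (Fin s) (Fin s) (B ⊗[K] Q) := Matrix.scalarAlgHom (Fin s) K
  let emb : ∀ j, Fin (q j) → (A j →ₐ[K] Q) := fun j a =>
    (PiTensorProduct.singleAlgHom (R := K) (A := fun j => ⨂[K] (_ : Fin (q j)), A j) j).comp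
      (PiTensorProduct.singleAlgHom (R := K) (A := fun _ : Fin (q j) => A j) a)
  let inQ : Q →ₐ[K] (B ⊗[K] Q) := Algebra.TensorProduct.includeRight
  let inB : B →ₐ[K] (B ⊗[K] Q) := Algebra.TensorProduct.includeLeft
  have hBQ : ∀ x y, Commute (inB x) (inQ y) := fun x y => by
    change _ * _ = _ * _
    simp [inB, inQ]
  let θ : Matrix (Fin s) (Fin s) K →ₐ[K] Module.End K (Fin t → S) :=
    H.comp (AlgHom.mapMatrix (Algebra.ofId K (B ⊗[K] Q)))
  have hθ : ∀ x X, Commute (H (sc x)) (θ X) := by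
    intro x X
    refine Commute.map (f := H) ?_
    apply scalar_comm'
    intro i j
    exact (Algebra.commutes (X i j) x).symm
  let ι := Σ j, Fin (q j)
  let f' : ∀ i : ι, A i.1 →ₐ[K] Module.End K (Fin t → S) := fun i =>
    H.comp (sc.comp (inQ.comp (emb i.1 i.2)))
  let g' : ∀ i : ι, (A i.1)ᵐᵒᵖ →ₐ[K] Module.End K (Fin t → S) := fun i => Δ.comp (g i.1 i.2)
  have hg'H : ∀ i y X, Commute (g' i y) (H X) := by
    intro i y X
    apply hΔ
    intro j a x
    exact (hfg j i.1 a i.2 x y).symm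
  have hemb : ∀ i j : ι, i ≠ j → ∀ x y, Commute (emb i.1 i.2 x) (emb j.1 j.2 y) := by
    rintro ⟨i, a⟩ ⟨j, b⟩ hij x y
    by_cases hc : i = j
    · subst hc
      have hab : a ≠ b := fun hab => hij (by rw [hab])
      refine Commute.map (f := PiTensorProduct.singleAlgHom (R := K) (A := fun j => ⨂[K] (_ : Fin (q j)), A j) i) ?_
      exact single_commute (fun _ : Fin (q i) => A i) a b hab x y
    · exact single_commute (fun j => ⨂[K] (_ : Fin (q j)), A j) i j hc _ _
  obtain ⟨V, _, _, _, hV, ⟨ψ⟩⟩ := strip_family (U := Fin t → S) (Finset.univ : Finset ι)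
    (fun i => A i.1) f' g'
    (fun i j x y => (hg'H j y _).symm)
    (fun i j hij x y => ((hemb i j hij x y).map inQ).map sc |>.map H)
    (fun i j hij x y => by
      refine Commute.map (f := Δ) ?_
      obtain ⟨i, a⟩ := i
      obtain ⟨j, b⟩ := j
      by_cases hc : i = j
      · subst hc
        exact hgg1 i a b (fun hab => hij (by rw [hab])) x y
      · exact hgg2 i j hc a b x y)
  set Z := Subalgebra.centralizer K (⋃ i ∈ (Finset.univ : Finset ι), (Set.range (f' i) ∪ Set.range (g' i))) with hZ
  have memZ : ∀ z, (∀ i x, Commute (f' i x) z) → (∀ i x, Commute (g' i x) z) → z ∈ Z := by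
    intro z h1 h2
    rw [hZ, Subalgebra.mem_centralizer_iff]
    intro w hw
    simp only [Set.mem_iUnion] at hw
    obtain ⟨i, -, hw⟩ := hw
    rcases hw with ⟨x, rfl⟩ | ⟨x, rfl⟩
    · exact h1 i x
    · exact h2 i x
  let θ' : Matrix (Fin s) (Fin s) K →ₐ[K] Z := θ.codRestrict Z fun X =>
    memZ _ (fun i x => hθ _ _) (fun i x => hg'H i x _)
  let b' : B →ₐ[K] Z := (H.comp (sc.comp inB)).codRestrict Z fun x =>
    memZ _ (fun i y => ((hBQ x _).symm.map sc).map H) (fun i y => hg'H i y _)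
  let d' : D →ₐ[K] Z := (Δ.comp h).codRestrict Z fun x =>
    memZ _ (fun i y => (hΔ _ (fun j a y => (hfh j a y x).symm) _).symm)
      (fun i y => (hgh i.1 i.2 y x).map Δ)
  obtain ⟨V2, _, _, _, hV2, ⟨ψ2⟩⟩ := strip_matrix s hs (ψ.comp θ')
  have hb2 : ∀ x, ψ.comp b' x ∈ Subalgebra.centralizer K (Set.range (ψ.comp θ')) := by
    intro x
    rw [Subalgebra.mem_centralizer_iff]
    rintro _ ⟨X, rfl⟩
    refine (Commute.map (f := ψ) (?_ : Commute (θ' X) (b' x))).eq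
    exact Subtype.ext (hθ (inB x) X).symm.eq
  have hd2 : ∀ x, ψ.comp d' x ∈ Subalgebra.centralizer K (Set.range (ψ.comp θ')) := by
    intro x
    rw [Subalgebra.mem_centralizer_iff]
    rintro _ ⟨X, rfl⟩
    refine (Commute.map (f := ψ) (?_ : Commute (θ' X) (d' x))).eq
    exact Subtype.ext (hΔ _ (fun j a y => (hfh j a y x).symm) _).symm.eq
  have dB := dvd_of_divisionRing (ψ2.comp ((ψ.comp b').codRestrict _ hb2))
  have dD := dvd_of_divisionRing (ψ2.comp ((ψ.comp d').codRestrict _ hd2))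
  have hP : FiniteDimensional K P ∧ Module.finrank K P = (∏ j, n j ^ p j) ^ 2 := by
    have h1 := fun j => pi_finrank (K := K) (fun _ : Fin (p j) => A j)
    have := fun j => (h1 j).1
    obtain ⟨h2, h3⟩ := pi_finrank (K := K) (fun j => ⨂[K] (_ : Fin (p j)), A j)
    refine ⟨h2, h3.trans ?_⟩
    rw [← Finset.prod_pow]
    refine Finset.prod_congr rfl fun j _ => ?_
    rw [(h1 j).2]
    simp [hA, ← pow_mul, mul_comm]
  have hQ : FiniteDimensional K Q ∧ Module.finrank K Q = (∏ j, n j ^ q j) ^ 2 := by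
    have h1 := fun j => pi_finrank (K := K) (fun _ : Fin (q j) => A j)
    have := fun j => (h1 j).1
    obtain ⟨h2, h3⟩ := pi_finrank (K := K) (fun j => ⨂[K] (_ : Fin (q j)), A j)
    refine ⟨h2, h3.trans ?_⟩
    rw [← Finset.prod_pow]
    refine Finset.prod_congr rfl fun j _ => ?_
    rw [(h1 j).2]
    simp [hA, ← pow_mul, mul_comm]
  have hdim := Φ.toLinearEquiv.finrank_eq
  rw [Module.finrank_matrix, Module.finrank_matrix, Module.finrank_tensorProduct] at hdim
  rw [show Module.finrank K (⨂[K] j, (⨂[K] (_ : Fin (q j)), A j)) = _ from hQ.2,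
    show Module.finrank K (⨂[K] j, (⨂[K] (_ : Fin (p j)), A j)) = _ from hP.2] at hdim
  simp only [Fintype.card_fin] at hdim
  have hprod : ∏ i : ι, Module.finrank K (A i.1) = (∏ j, n j ^ q j) ^ 2 := by
    rw [Fintype.prod_sigma, ← Finset.prod_pow]
    refine Finset.prod_congr rfl fun j _ => ?_
    simp [hA, ← pow_mul, mul_comm]
  rw [hprod, Module.finrank_pi_fintype, hV2] at hV
  simp only [hS, Finset.sum_const, Finset.card_univ, Fintype.card_fin, smul_eq_mul] at hV
  rw [hD] at dD
  exact arith t _ _ δ s _ _ hs (Finset.prod_pos fun j _ => pow_pos (hn j) _) hδ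
    Module.finrank_pos hV hdim dB dD

end Assembly


section Final

variable {K M : Type u} [Field K] [Field M] [Algebra K M]

/-- the slot of the `j`-th algebra -/
noncomputable def aslot {r : ℕ} (n : Fin r → ℕ) (θ : Lat r →* Kˣ) (j : Fin r) :
    Slot K (Lat r) := kslot n θ (-Pi.single j 1)

theorem aslot_index {r : ℕ} (n : Fin r → ℕ) (hn : ∀ j, 0 < n j) (θ : Lat r →* Kˣ) (j : Fin r) :
    (aslot n θ j).Λ.index = n j := by
  change (lamSub n _).index = _
  rw [lamSub_index n hn, Finset.prod_eq_single j]
  · simp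
  · intro i _ hij
    simp [Pi.single_eq_of_ne hij, Nat.div_self (hn i)]
  · simp

/-- index type -/
abbrev Idx {r : ℕ} (p q : Fin r → ℕ) : Type :=
  (Σ j, Fin (p j)) ⊕ ((Σ j, Fin (q j)) ⊕ (Unit ⊕ Unit))

/-- all the slots -/
noncomputable def slots {r : ℕ} (p q : Fin r → ℕ) (n : Fin r → ℕ) (θ : Lat r →* Kˣ)
    (κ : Fin r → ℤ) : Idx p q → Slot K (Lat r)
  | Sum.inl x => aslot n θ x.1
  | Sum.inr (Sum.inl x) => (aslot n θ x.1).inv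
  | Sum.inr (Sum.inr (Sum.inl _)) => kslot n θ κ
  | Sum.inr (Sum.inr (Sum.inr _)) => (kslot n θ (fun _ => 1)).inv

theorem theta_prod {r : ℕ} (p q : Fin r → ℕ) (n : Fin r → ℕ) (hn : ∀ j, 0 < n j)
    (θ : Lat r →* Kˣ) (κ : Fin r → ℤ) (hκ : ∀ j, (p j : ℤ) - q j = κ j) (m : Fin r → ℤ) :
    (∏ j, (θ (Multiplicative.ofAdd (Pi.single j (m j)))) ^ p j) *
    ((∏ j, ((θ (Multiplicative.ofAdd (Pi.single j (m j))))⁻¹) ^ q j) *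
      θ (Multiplicative.ofAdd fun j => -(κ j * m j))) = 1 := by
  have h1 : ∀ x : Fin r → ℤ, θ (Multiplicative.ofAdd x) =
      ∏ j, θ (Multiplicative.ofAdd (Pi.single j (x j))) := by
    intro x
    conv_lhs => rw [← Finset.univ_sum_single x]
    rw [ofAdd_sum, map_prod]
  rw [h1 (fun j => -(κ j * m j)), ← Finset.prod_mul_distrib, ← Finset.prod_mul_distrib]
  apply Finset.prod_eq_one
  intro j _
  rw [← map_inv θ, ← map_pow θ, ← map_pow θ, ← map_mul θ, ← map_mul θ, ← map_one θ]
  congr 1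
  apply Multiplicative.toAdd.injective
  simp only [toAdd_mul, toAdd_pow, toAdd_ofAdd, toAdd_inv, toAdd_one]
  rw [← hκ j]
  funext i
  by_cases h : i = j
  · subst h
    simp
    ring
  · simp [Pi.single_eq_of_ne h]

theorem exists_S {r : ℕ} (n : Fin r → ℕ) (hn : ∀ j, 0 < n j) [FiniteDimensional K M] [IsGalois K M]
    (σ : Lat r →* (M ≃ₐ[K] M)) (θ : Lat r →* Kˣ) (hσ : Function.Surjective σ)
    (hker : ∀ γ, σ γ = 1 ↔ ∀ j, (n j : ℤ) ∣ γ.toAdd j)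
    (good : ∀ κ, (kslot n θ κ).Good σ) (κ : Fin r → ℤ) (p q : Fin r → ℕ)
    (hκ : ∀ j, (p j : ℤ) - q j = κ j) :
    ∃ (S : Type u) (_ : AddCommGroup S) (_ : Module K S),
      FiniteDimensional K S ∧
      Module.finrank K S = (∏ j, n j ^ p j) * (∏ j, n j ^ q j) *
        (∏ j, n j / Nat.gcd (n j) (κ j).natAbs) ∧
      ∃ F : ∀ i : Idx p q, i ≠ Sum.inr (Sum.inr (Sum.inr ())) →
          ((slots p q n θ κ i).Alg σ →ₐ[K] Module.End K S),
        ∀ i j hi hj, i ≠ j → ∀ x y, Commute (F i hi x) (F j hj y) := by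
  classical
  let T : Slot K (Lat r) := kslot n θ (fun _ => 1)
  let s := slots p q n θ κ
  have hTm : ∀ l ∈ T.Λ, ∀ j, (n j : ℤ) ∣ l.toAdd j := by
    intro l hl j
    have := hl j
    rwa [one_mul] at this
  have hT1 : ∀ l ∈ T.Λ, σ l = 1 := fun l hl => (hker l).2 (hTm l hl)
  have hle : ∀ κ', T.Λ ≤ (kslot n θ κ').Λ := fun κ' l hl j => Dvd.dvd.mul_left (hTm l hl j) _
  have hT2 : ∀ i, T.Λ ≤ (s i).Λ := by
    rintro (x | x | _ | _)
    · exact hle _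
    · exact hle _
    · exact hle _
    · exact hle _
  have hT3 : ∀ l : T.Λ, T.τ l * ∏ i, (s i).τ ⟨l, hT2 i l.2⟩ = 1 := by
    intro l
    choose m hm using hTm l l.2
    have hq : ∀ j (c : ℤ), c * l.1.toAdd j / n j = c * m j := by
      intro j c
      rw [hm j, mul_left_comm, Int.mul_ediv_cancel_left _ (by exact_mod_cast (hn j).ne')]
    have ha : ∀ j (h : l.1 ∈ (aslot n θ j).Λ), (aslot n θ j).τ ⟨l.1, h⟩ =
        θ (Multiplicative.ofAdd (Pi.single j (m j))) := by
      intro j h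
      change θ (Multiplicative.ofAdd fun i => -((-Pi.single j 1 : Fin r → ℤ) i * l.1.toAdd i / n i)) = _
      congr 2
      funext i
      rw [hq]
      by_cases hij : i = j
      · subst hij; simp
      · simp [Pi.single_eq_of_ne hij]
    have hD : ∀ (h : l.1 ∈ (kslot n θ κ).Λ), (kslot n θ κ).τ ⟨l.1, h⟩ =
        θ (Multiplicative.ofAdd fun j => -(κ j * m j)) := by
      intro h
      change θ (Multiplicative.ofAdd fun i => -(κ i * l.1.toAdd i / n i)) = _
      congr 2
      funext i
      rw [hq]
    rw [Fintype.prod_sum_type, Fintype.prod_sum_type, Fintype.prod_sum_type]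
    have e1 : ∏ x : (Σ j, Fin (p j)), (s (Sum.inl x)).τ ⟨l, hT2 _ l.2⟩ =
        ∏ j, (θ (Multiplicative.ofAdd (Pi.single j (m j)))) ^ p j := by
      rw [Fintype.prod_sigma]
      refine Finset.prod_congr rfl fun j _ => ?_
      refine (Finset.prod_congr rfl fun y _ => ha j (hT2 (Sum.inl ⟨j, y⟩) l.2)).trans ?_
      simp
    have e2 : ∏ x : (Σ j, Fin (q j)), (s (Sum.inr (Sum.inl x))).τ ⟨l, hT2 _ l.2⟩ =
        ∏ j, ((θ (Multiplicative.ofAdd (Pi.single j (m j))))⁻¹) ^ q j := by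
      rw [Fintype.prod_sigma]
      refine Finset.prod_congr rfl fun j _ => ?_
      refine (Finset.prod_congr rfl fun y _ =>
        congrArg (·⁻¹) (ha j (hT2 (Sum.inr (Sum.inl ⟨j, y⟩)) l.2))).trans ?_
      simp
    have e3 : (s (Sum.inr (Sum.inr (Sum.inl ())))).τ ⟨l, hT2 _ l.2⟩ = _ := hD (hle _ l.2)
    have e4 : (s (Sum.inr (Sum.inr (Sum.inr ())))).τ ⟨l, hT2 _ l.2⟩ = (T.τ l)⁻¹ := rfl
    rw [e1, e2, Fintype.prod_unique (ι := Unit), Fintype.prod_unique (ι := Unit)]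
    have h := theta_prod p q n hn θ κ hκ m
    rw [show (s (Sum.inr (Sum.inr (Sum.inl (default : Unit))))).τ ⟨l, hT2 _ l.2⟩ = _ from e3,
      show (s (Sum.inr (Sum.inr (Sum.inr (default : Unit))))).τ ⟨l, hT2 _ l.2⟩ = _ from e4]
    rw [← mul_assoc (∏ j, _⁻¹ ^ q j), ← mul_assoc (∏ j, _ ^ p j), h, one_mul, mul_inv_cancel]
  have hfi : ∀ i, (s i).Λ.FiniteIndex := by
    rintro (x | x | _ | _)
    · exact lamSub_finite n hn _
    · exact lamSub_finite n hn _
    · exact lamSub_finite n hn _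
    · exact lamSub_finite n hn _
  obtain ⟨hU1, hU2⟩ := QP.finrank (M := M) s
  have gT := good (fun _ => 1)
  have := gT.dom
  have := gT.fin
  have := gT.central
  letI : DivisionRing (T.Alg σ) := divisionRingOfFiniteDimensional K _
  let t : Idx p q := Sum.inr (Sum.inr (Sum.inr ()))
  let f := QP.drho σ s T hT1 hT2 hT3
  let g : (T.Alg σ)ᵐᵒᵖ →ₐ[K] Module.End K (QP M s) :=
    (QP.rho σ s t).comp (AlgHom.opComm (T.opHom σ))
  obtain ⟨S, i1, i2, i3, hS, ⟨ψ⟩⟩ := strip_pair (K := K) (C := T.Alg σ) f g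
    (fun x y => QP.drho_commute σ s T hT1 hT2 hT3 t x _)
  have hmem : ∀ i, i ≠ t → ∀ x, QP.rho σ s i x ∈
      Subalgebra.centralizer K (Set.range f ∪ Set.range g) := by
    intro i hi x
    rw [Subalgebra.mem_centralizer_iff]
    rintro _ (⟨y, rfl⟩ | ⟨y, rfl⟩)
    · exact QP.drho_commute σ s T hT1 hT2 hT3 i y x
    · exact QP.rho_commute σ s t i hi.symm _ _
  refine ⟨S, i1, i2, i3, ?_, fun i hi => ψ.comp ((QP.rho σ s i).codRestrict _ (hmem i hi)), ?_⟩
  · have hTk : T.Λ = σ.ker := by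
      ext l
      rw [MonoidHom.mem_ker, hker]
      exact ⟨hTm l, fun h j => by rw [one_mul]; exact h j⟩
    have hM : T.Λ.index = Module.finrank K M := by
      rw [hTk, Subgroup.index_ker, MonoidHom.range_eq_top_of_surjective _ hσ,
        Subgroup.card_top, IsGalois.card_aut_eq_finrank]
    rw [gT.rank, hU2, ← hM] at hS
    have hpos : 0 < T.Λ.index := by rw [hM]; exact Module.finrank_pos
    rw [Fintype.prod_sum_type, Fintype.prod_sum_type, Fintype.prod_sum_type,
      Fintype.prod_sigma, Fintype.prod_sigma, Fintype.prod_unique (ι := Unit),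
      Fintype.prod_unique (ι := Unit)] at hS
    have e1 : ∏ j, ∏ y : Fin (p j), (s (Sum.inl ⟨j, y⟩)).Λ.index = ∏ j, n j ^ p j := by
      refine Finset.prod_congr rfl fun j _ => ?_
      refine (Finset.prod_congr rfl fun y _ => aslot_index n hn θ j).trans ?_
      simp
    have e2 : ∏ j, ∏ y : Fin (q j), (s (Sum.inr (Sum.inl ⟨j, y⟩))).Λ.index = ∏ j, n j ^ q j := by
      refine Finset.prod_congr rfl fun j _ => ?_
      refine (Finset.prod_congr rfl fun y _ => aslot_index n hn θ j).trans ?_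
      simp
    rw [e1, e2, show (s (Sum.inr (Sum.inr (Sum.inl (default : Unit))))).Λ.index = _ from
      lamSub_index n hn κ, show (s (Sum.inr (Sum.inr (Sum.inr (default : Unit))))).Λ.index =
        T.Λ.index from rfl] at hS
    apply Nat.eq_of_mul_eq_mul_left (pow_pos hpos 2)
    rw [← show _ = T.Λ.index ^ 2 * Module.finrank K S from hS]
    ring
  · intro i j hi hj hij x y
    refine Commute.map (f := ψ) ?_
    exact Subtype.ext (QP.rho_commute σ s i j hij x y)

end Final


section Main

theorem main9 {k : Type u} [Field k] (r : ℕ)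
    (n : Fin r → ℕ) (hn : ∀ j, 0 < n j) :
    ∃ (K : Type u) (_ : Field K) (_ : Algebra k K)
      (A : Fin r → Type u) (_ : ∀ j, DivisionRing (A j)) (_ : ∀ j, Algebra K (A j)),
      (∀ j, Algebra.IsCentral K (A j)) ∧
      (∀ j, Module.finrank K (A j) = (n j) ^ 2) ∧
      ∀ (κ : Fin r → ℤ) (B : Type u) [DivisionRing B] [Algebra K B]
        [Algebra.IsCentral K B] [FiniteDimensional K B],
        (∃ s t : ℕ, 0 < s ∧ 0 < t ∧
          Nonempty
            (Matrix (Fin s) (Fin s)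
                (B ⊗[K] (⨂[K] j, (⨂[K] (_ : Fin ((-(κ j)).toNat)), A j))) ≃ₐ[K]
              Matrix (Fin t) (Fin t)
                (⨂[K] j, (⨂[K] (_ : Fin ((κ j).toNat)), A j)))) →
        Module.finrank K B = (∏ j, n j / Nat.gcd (n j) (κ j).natAbs) ^ 2 := by
  obtain ⟨K, M, iK, iM, ikK, iKM, σ, θ, hfd, hgal, hsurj, hker, good⟩ := exists_setup k r n hn
  have gA : ∀ j, (aslot n θ j).Good σ := fun j => good _
  have hdom : ∀ j, IsDomain ((aslot n θ j).Alg σ) := fun j => (gA j).dom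
  have hfin : ∀ j, FiniteDimensional K ((aslot n θ j).Alg σ) := fun j => (gA j).fin
  have hcen : ∀ j, Algebra.IsCentral K ((aslot n θ j).Alg σ) := fun j => (gA j).central
  letI iA : ∀ j, DivisionRing ((aslot n θ j).Alg σ) := fun j => divisionRingOfFiniteDimensional K _
  have hrank : ∀ j, Module.finrank K ((aslot n θ j).Alg σ) = n j ^ 2 := fun j => by
    rw [(gA j).rank, aslot_index n hn]
  refine ⟨K, iK, ikK, fun j => (aslot n θ j).Alg σ, iA, fun j => inferInstance, hcen, hrank, ?_⟩
  intro κ B _ _ _ _ h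
  obtain ⟨s, t, hs, ht, ⟨Φ⟩⟩ := h
  have gD := good κ
  have := gD.dom
  have := gD.fin
  letI : DivisionRing ((kslot n θ κ).Alg σ) := divisionRingOfFiniteDimensional K _
  obtain ⟨S, _, _, _, hS, F, hF⟩ := exists_S n hn σ θ hsurj hker good κ
    (fun j => (κ j).toNat) (fun j => (-(κ j)).toNat) (fun j => by omega)
  have ne1 : ∀ x : (Σ j, Fin (κ j).toNat), (Sum.inl x : Idx (fun j => (κ j).toNat)
      (fun j => (-(κ j)).toNat)) ≠ Sum.inr (Sum.inr (Sum.inr ())) := fun x => by simp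
  have ne2 : ∀ x : (Σ j, Fin (-(κ j)).toNat), (Sum.inr (Sum.inl x) : Idx (fun j => (κ j).toNat)
      (fun j => (-(κ j)).toNat)) ≠ Sum.inr (Sum.inr (Sum.inr ())) := fun x => by simp
  have ne3 : (Sum.inr (Sum.inr (Sum.inl ())) : Idx (fun j => (κ j).toNat)
      (fun j => (-(κ j)).toNat)) ≠ Sum.inr (Sum.inr (Sum.inr ())) := by simp
  refine assembly (K := K) (fun j => (κ j).toNat) (fun j => (-(κ j)).toNat) n hn
    (∏ j, n j / Nat.gcd (n j) (κ j).natAbs) (Finset.prod_pos fun j _ => quo_pos _ (hn j) _)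
    (fun j => (aslot n θ j).Alg σ) hrank ((kslot n θ κ).Alg σ)
    (gD.rank.trans (congrArg (· ^ 2) (lamSub_index n hn κ))) S hS
    (fun j a => F (Sum.inl ⟨j, a⟩) (ne1 _))
    (fun j a => (F (Sum.inr (Sum.inl ⟨j, a⟩)) (ne2 _)).comp
      (AlgHom.opComm ((aslot n θ j).opHom σ)))
    (F (Sum.inr (Sum.inr (Sum.inl ()))) ne3) ?_ ?_ ?_ ?_ ?_ ?_ ?_ B s t hs ht Φ
  · intro j a b hab x y
    exact hF _ _ _ _ (by simpa using hab) _ _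
  · intro i j hij a b x y
    exact hF _ _ _ _ (fun h => hij (congrArg Sigma.fst (Sum.inl.inj h))) _ _
  · intro j a b hab x y
    exact hF _ _ _ _ (by simpa using hab) _ _
  · intro i j hij a b x y
    exact hF _ _ _ _ (fun h => hij (congrArg Sigma.fst (Sum.inl.inj (Sum.inr.inj h)))) _ _
  · intro i j a b x y
    exact hF _ _ _ _ (by simp) _ _
  · intro i a x y
    exact hF _ _ _ _ (by simp) _ _
  · intro i a x y
    exact hF _ _ _ _ (by simp) _ _

end Main


end Stmt9

theorem statement9 {k : Type u} [Field k] (r : ℕ) (hr : 1 ≤ r)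
    (n : Fin r → ℕ) (hn : ∀ j, 0 < n j) :
    ∃ (K : Type u) (_ : Field K) (_ : Algebra k K)
      (A : Fin r → Type u) (_ : ∀ j, DivisionRing (A j)) (_ : ∀ j, Algebra K (A j)),
      -- each `Aⱼ` is a central division algebra over `K` of degree `nⱼ`
      (∀ j, Algebra.IsCentral K (A j)) ∧
      (∀ j, Module.finrank K (A j) = (n j) ^ 2) ∧
      -- for all integers `κ₁,…,κ_r`, every central division algebra `B` over `K`
      -- representing the Brauer class `κ₁[A₁] + ⋯ + κ_r[A_r]` has degree
      -- `∏ⱼ nⱼ/gcd(nⱼ,κⱼ)`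
      ∀ (κ : Fin r → ℤ) (B : Type u) [DivisionRing B] [Algebra K B]
        [Algebra.IsCentral K B] [FiniteDimensional K B],
        (∃ s t : ℕ, 0 < s ∧ 0 < t ∧
          Nonempty
            (Matrix (Fin s) (Fin s)
                (B ⊗[K] (⨂[K] j, (⨂[K] (_ : Fin ((-(κ j)).toNat)), A j))) ≃ₐ[K]
              Matrix (Fin t) (Fin t)
                (⨂[K] j, (⨂[K] (_ : Fin ((κ j).toNat)), A j)))) →
        Module.finrank K B = (∏ j, n j / Nat.gcd (n j) (κ j).natAbs) ^ 2 := by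
  exact Stmt9.main9 r n hn
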